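/- arXiv:2407.12509 — 4 statements merged into one kernel-verified Lean document; each statement's English description precedes it below -/
import Mathlib

section
/- (Theorem 1, consequences.) Let the data (u_{[0,t−1]}, y_{[0,t−1]}) with u_{[0,t−1]} ≠ 0 be generated by a minimal true system with n_true states and lag ℓ_true, and let L, N satisfy ℓ_true ≤ L and n_true ≤ N. If t ≥ L_t^a + (L_t^a + 1)m + n_min,t and rank H_{L_t^a,t} = (L_t^a + 1)m + n_min,t, where L_t^a := min(L, N − n_min,t + ℓ_min,t), then ℓ_true = ℓ_min,t, n_true = n_min,t, and ℰ_t ∩ M ∩ S_{L,N} = ℰ_t(n_min,t). -/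
/-!
Write `n = n_min,t`, `ℓ = ℓ_min,t`, `K = min L (N - n + ℓ)`, and call the input/output windows of
length `k` that a system produces its restricted behavior `𝔅_k`; its dimension is at most
`k m + rank Ω_{k-1}`. The columns of `H_{K,t}` lie in `𝔅_{K+1}(S)` for every explaining system `S`.
If `S₀` is an explaining system with `n` states, the rank condition leaves no room: the columns
span `𝔅_{K+1}(S₀)`, so `𝔅_{K+1}(S₀) ⊆ 𝔅_{K+1}(S)`, and `S₀` is observable.

Restricted to zero input, this inclusion compares observability matrices. An explaining system of
lag at most `K` has lag at least that of `S₀`, so `S₀` has lag `ℓ`. Moreover, the rank of `Ω` is at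
least `n` after `ℓ` blocks of `S` and increases strictly up to the lag, so the surplus of the lag of
`S` over `ℓ` is at most the surplus of its state dimension over `n`. Hence every explaining system
in `S_{L,N}` has lag at most `K`.

If `S` is observable with lag at most `K`, then `K` consecutive inputs and outputs determine its
state, windows overlapping in `K` samples can be glued, and `𝔅_k(S₀) ⊆ 𝔅_k(S)` for all `k`. An
impulse preceded by `K` zero samples forces the zero initial state, so the Markov parameters agree.
If `S` is minimal, the Hankel matrix of Markov parameters has rank equal to the number of states of
`S`, which forces `S₀` to have as many states and to be minimal as well.
-/

open Matrix

/-- The Hankel matrix with `rows` block rows and `cols` columns built from the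
vector sequence `f` (starting at time `0`): the block entry in block row `r` and
column `c` is `f (r + c)`.  Thus `H_k(f_{[0,t-1]}) = hankel f (k+1) (t-k)`. -/
def hankel {d : ℕ} (f : ℕ → Fin d → ℝ) (rows cols : ℕ) :
    Matrix (Fin rows × Fin d) (Fin cols) ℝ :=
  Matrix.of fun r c => f ((r.1 : ℕ) + (c : ℕ)) r.2

/-- `u_{[0,t-1]}` is persistently exciting of order `k+1`, i.e. the Hankel
matrix `H_k(u_{[0,t-1]})` (with `k+1` block rows) has full row rank. -/
def PersistentlyExciting {m : ℕ} (u : ℕ → Fin m → ℝ) (t k : ℕ) : Prop :=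
  (hankel u (k + 1) (t - k)).rank = (k + 1) * m

/-- The Hankel matrix `H_{k,t}`: `H_k(y_{[0,t-1]})` stacked on top of
`H_k(u_{[0,t-1]})`. -/
def Hkt {m p : ℕ} (u : ℕ → Fin m → ℝ) (y : ℕ → Fin p → ℝ) (k t : ℕ) :
    Matrix ((Fin (k + 1) × Fin p) ⊕ (Fin (k + 1) × Fin m)) (Fin (t - k)) ℝ :=
  Matrix.fromRows (hankel y (k + 1) (t - k)) (hankel u (k + 1) (t - k))

/-- The matrix `G_{k,t}`: `H_{k-1}(y_{[0,t-2]})` (which has `k` block rows and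
`t-k` columns) stacked on top of `H_k(u_{[0,t-1]})`. -/
def Gkt {m p : ℕ} (u : ℕ → Fin m → ℝ) (y : ℕ → Fin p → ℝ) (k t : ℕ) :
    Matrix ((Fin k × Fin p) ⊕ (Fin (k + 1) × Fin m)) (Fin (t - k)) ℝ :=
  Matrix.fromRows (hankel y k (t - k)) (hankel u (k + 1) (t - k))

/-- `δ_{k,t} = rank H_{k,t} - rank G_{k,t}`. -/
noncomputable def deltaKT {m p : ℕ} (u : ℕ → Fin m → ℝ) (y : ℕ → Fin p → ℝ) (k t : ℕ) : ℕ :=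
  (Hkt u y k t).rank - (Gkt u y k t).rank

/-- `q_t`: the smallest `k ∈ [0, t-1]` with `δ_{k,t} = 0`. -/
noncomputable def qT {m p : ℕ} (u : ℕ → Fin m → ℝ) (y : ℕ → Fin p → ℝ) (t : ℕ) : ℕ :=
  sInf {k | k ≤ t - 1 ∧ deltaKT u y k t = 0}

/-- A discrete-time linear system `(A, B, C, D)` with `m` inputs, `p` outputs
and `n` states. -/
structure LinSys (m p : ℕ) where
  n : ℕ
  A : Matrix (Fin n) (Fin n) ℝ
  B : Matrix (Fin n) (Fin m) ℝ
  C : Matrix (Fin p) (Fin n) ℝ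
  D : Matrix (Fin p) (Fin m) ℝ

/-- `obsMat sys k` is the observability matrix `Ω_{k-1}` with `k` block rows,
stacking `C, CA, ..., CA^(k-1)`. -/
def obsMat {m p : ℕ} (sys : LinSys m p) (k : ℕ) :
    Matrix (Fin k × Fin p) (Fin sys.n) ℝ :=
  Matrix.of fun r j => (sys.C * sys.A ^ (r.1 : ℕ)) r.2 j

/-- The lag `ℓ(C,A)`: the smallest `k ≥ 0` with `rank Ω_k = rank Ω_{k-1}`. -/
noncomputable def lag {m p : ℕ} (sys : LinSys m p) : ℕ :=
  sInf {k | (obsMat sys (k + 1)).rank = (obsMat sys k).rank}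

/-- The controllability matrix with `k` blocks `[B, AB, ..., A^(k-1)B]`. -/
def ctrlMat {m p : ℕ} (sys : LinSys m p) (k : ℕ) :
    Matrix (Fin sys.n) (Fin k × Fin m) ℝ :=
  Matrix.of fun i c => (sys.A ^ (c.1 : ℕ) * sys.B) i c.2

def Observable {m p : ℕ} (sys : LinSys m p) : Prop :=
  (obsMat sys sys.n).rank = sys.n

def Controllable {m p : ℕ} (sys : LinSys m p) : Prop :=
  (ctrlMat sys sys.n).rank = sys.n

def MinimalSys {m p : ℕ} (sys : LinSys m p) : Prop :=
  Controllable sys ∧ Observable sys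

/-- The system explains the data `(u_{[0,t-1]}, y_{[0,t-1]})` with the
compatible state sequence `x`. -/
def ExplainsWith {m p : ℕ} (sys : LinSys m p) (t : ℕ) (u : ℕ → Fin m → ℝ)
    (y : ℕ → Fin p → ℝ) (x : ℕ → Fin sys.n → ℝ) : Prop :=
  ∀ s < t, x (s + 1) = sys.A.mulVec (x s) + sys.B.mulVec (u s) ∧
    y s = sys.C.mulVec (x s) + sys.D.mulVec (u s)

/-- The system explains (equivalently, generates) the data
`(u_{[0,t-1]}, y_{[0,t-1]})`. -/
def Explains {m p : ℕ} (sys : LinSys m p) (t : ℕ) (u : ℕ → Fin m → ℝ)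
    (y : ℕ → Fin p → ℝ) : Prop :=
  ∃ x : ℕ → Fin sys.n → ℝ, ExplainsWith sys t u y x

/-- `ℰ_t`, the set of systems explaining the data. -/
def ExplSet {m p : ℕ} (t : ℕ) (u : ℕ → Fin m → ℝ) (y : ℕ → Fin p → ℝ) :
    Set (LinSys m p) :=
  {sys | Explains sys t u y}

/-- `ℓ_min,t`: the smallest lag among explaining systems. -/
noncomputable def lMin {m p : ℕ} (t : ℕ) (u : ℕ → Fin m → ℝ) (y : ℕ → Fin p → ℝ) : ℕ :=
  sInf {ℓ | ∃ sys : LinSys m p, Explains sys t u y ∧ lag sys = ℓ}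

/-- `n_min,t`: the smallest state dimension among explaining systems. -/
noncomputable def nMin {m p : ℕ} (t : ℕ) (u : ℕ → Fin m → ℝ) (y : ℕ → Fin p → ℝ) : ℕ :=
  sInf {n | ∃ sys : LinSys m p, Explains sys t u y ∧ sys.n = n}

/-- Two systems are isomorphic: `D₁ = D₂` and there is an invertible state
transformation `S` with `S A₁ = A₂ S`, `S B₁ = B₂`, `C₁ = C₂ S`. -/
def Isomorphic {m p : ℕ} (s1 s2 : LinSys m p) : Prop :=
  s1.D = s2.D ∧ ∃ (S : Matrix (Fin s2.n) (Fin s1.n) ℝ)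
    (S' : Matrix (Fin s1.n) (Fin s2.n) ℝ),
    S * S' = 1 ∧ S' * S = 1 ∧ S * s1.A = s2.A * S ∧ S * s1.B = s2.B ∧
    s1.C = s2.C * S

/-- `M`, the set of minimal systems. -/
def Mset (m p : ℕ) : Set (LinSys m p) := {sys | MinimalSys sys}

/-- `S_{L,N}`, the set of systems with lag at most `L` and at most `N` states. -/
def SLN (m p L N : ℕ) : Set (LinSys m p) := {sys | lag sys ≤ L ∧ sys.n ≤ N}

/-- The data `(u_{[0,t-1]}, y_{[0,t-1]})` are informative for system
identification (with prior bounds `L`, `N`, and true state dimension `nTrue`). -/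
def Informative {m p : ℕ} (t : ℕ) (u : ℕ → Fin m → ℝ) (y : ℕ → Fin p → ℝ)
    (nTrue L N : ℕ) : Prop :=
  (ExplSet t u y ∩ Mset m p ∩ SLN m p L N =
      {sys ∈ ExplSet t u y | sys.n = nTrue} ∩ Mset m p ∩ SLN m p L N) ∧
  ∀ s1 ∈ ExplSet t u y ∩ Mset m p ∩ SLN m p L N,
    ∀ s2 ∈ ExplSet t u y ∩ Mset m p ∩ SLN m p L N, Isomorphic s1 s2

lemma finrank_map_add_finrank_inf_ker {K V W : Type*} [DivisionRing K] [AddCommGroup V]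
    [Module K V] [AddCommGroup W] [Module K W] (f : V →ₗ[K] W) (U : Submodule K V)
    [FiniteDimensional K U] :
    Module.finrank K (U.map f) + Module.finrank K ↥(U ⊓ LinearMap.ker f) =
      Module.finrank K U := by
  rw [← (f.domRestrict U).finrank_range_add_finrank_ker, LinearMap.range_domRestrict,
    LinearMap.ker_domRestrict, ← Submodule.finrank_map_subtype_eq U, Submodule.map_comap_subtype]

namespace LinSys

variable {m p : ℕ}

section Unobservable

variable (S : LinSys m p)

/-- The `k`-step unobservable subspace `ker Ω_{k-1}`: the initial states from which the
unforced outputs at the first `k` times vanish. -/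
noncomputable def unobservable (k : ℕ) : Submodule ℝ (Fin S.n → ℝ) :=
  LinearMap.ker (obsMat S k).mulVecLin

lemma obsMat_mulVec_apply (k : ℕ) (x : Fin S.n → ℝ) (r : Fin k × Fin p) :
    (obsMat S k *ᵥ x) r = (S.C *ᵥ S.A ^ (r.1 : ℕ) *ᵥ x) r.2 := by
  rw [mulVec_mulVec]
  rfl

lemma mem_unobservable {k : ℕ} {x : Fin S.n → ℝ} :
    x ∈ S.unobservable k ↔ ∀ i < k, S.C *ᵥ S.A ^ i *ᵥ x = 0 := by
  simp [unobservable, funext_iff, obsMat_mulVec_apply, Fin.forall_iff, -mulVec_mulVec]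

lemma unobservable_antitone : Antitone S.unobservable := fun _ _ hjk _ hx ↦
  S.mem_unobservable.2 fun i hi ↦ S.mem_unobservable.1 hx i (hi.trans_le hjk)

lemma unobservable_succ (k : ℕ) :
    S.unobservable (k + 1) =
      LinearMap.ker S.C.mulVecLin ⊓ (S.unobservable k).comap S.A.mulVecLin := by
  ext x
  rw [mem_unobservable, Nat.forall_lt_succ_left]
  simp [mem_unobservable, pow_succ]

lemma rank_obsMat_add_finrank_unobservable (k : ℕ) :
    (obsMat S k).rank + Module.finrank ℝ (S.unobservable k) = S.n := by
  rw [Matrix.rank, unobservable, LinearMap.finrank_range_add_finrank_ker, Module.finrank_fin_fun]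

lemma rank_obsMat_le (k : ℕ) : (obsMat S k).rank ≤ S.n := by
  simpa using (obsMat S k).rank_le_card_width

lemma unobservable_eq_bot_iff {k : ℕ} : S.unobservable k = ⊥ ↔ (obsMat S k).rank = S.n := by
  have := S.rank_obsMat_add_finrank_unobservable k
  rw [← Submodule.finrank_eq_zero]
  omega

lemma rank_obsMat_mono : Monotone fun k ↦ (obsMat S k).rank := fun j k hjk ↦ by
  have := Submodule.finrank_mono (S.unobservable_antitone hjk)
  have := S.rank_obsMat_add_finrank_unobservable j
  have := S.rank_obsMat_add_finrank_unobservable k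
  dsimp only
  omega

lemma rank_obsMat_succ_eq_iff {k : ℕ} :
    (obsMat S (k + 1)).rank = (obsMat S k).rank ↔ S.unobservable (k + 1) = S.unobservable k := by
  have hk := S.rank_obsMat_add_finrank_unobservable k
  have hk' := S.rank_obsMat_add_finrank_unobservable (k + 1)
  refine ⟨fun h ↦ Submodule.eq_of_le_of_finrank_eq (S.unobservable_antitone k.le_succ) (by omega),
    fun h ↦ ?_⟩
  rw [h] at hk'
  omega

lemma lag_le_of_unobservable_succ_eq {k : ℕ}
    (h : S.unobservable (k + 1) = S.unobservable k) : lag S ≤ k :=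
  Nat.sInf_le (S.rank_obsMat_succ_eq_iff.2 h)

lemma unobservable_lag_succ : S.unobservable (lag S + 1) = S.unobservable (lag S) := by
  obtain ⟨k, hk⟩ := IsArtinian.monotone_stabilizes
    (⟨S.unobservable, S.unobservable_antitone⟩ : ℕ →o (Submodule ℝ (Fin S.n → ℝ))ᵒᵈ)
  exact S.rank_obsMat_succ_eq_iff.1 <|
    Nat.sInf_mem (s := {k | (obsMat S (k + 1)).rank = (obsMat S k).rank})
      ⟨k, S.rank_obsMat_succ_eq_iff.2 (hk (k + 1) k.le_succ).symm⟩

lemma unobservable_eq_of_lag_le {k : ℕ} (hk : lag S ≤ k) :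
    S.unobservable k = S.unobservable (lag S) := by
  induction k, hk using Nat.le_induction with
  | base => rfl
  | succ k _ ih => rw [unobservable_succ, ih, ← unobservable_succ, unobservable_lag_succ]

lemma unobservable_eq_bot_of_lag_le {j k : ℕ} (hj : S.unobservable j = ⊥) (hk : lag S ≤ k) :
    S.unobservable k = ⊥ := by
  rw [S.unobservable_eq_of_lag_le hk, ← S.unobservable_eq_of_lag_le (le_max_right j _), eq_bot_iff,
    ← hj]
  exact S.unobservable_antitone (le_max_left j _)

lemma rank_obsMat_lt_succ {k : ℕ} (hk : k < lag S) :
    (obsMat S k).rank < (obsMat S (k + 1)).rank :=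
  (S.rank_obsMat_mono k.le_succ).lt_of_ne' (fun h ↦ hk.not_ge (Nat.sInf_le h))

lemma rank_obsMat_add_lag_le {k : ℕ} (hk : k ≤ lag S) :
    (obsMat S k).rank + lag S ≤ S.n + k := by
  induction hk using Nat.decreasingInduction with
  | self => exact Nat.add_le_add_right (S.rank_obsMat_le _) _
  | of_succ k hk ih =>
    have := S.rank_obsMat_lt_succ hk
    omega

end Unobservable

section Trajectories

variable (S : LinSys m p)

/-- The state at time `k` as a linear function of the initial state and the input sequence. -/
def state : ℕ → ((Fin S.n → ℝ) × (ℕ → Fin m → ℝ)) →ₗ[ℝ] (Fin S.n → ℝ)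
  | 0 => LinearMap.fst ℝ _ _
  | k + 1 =>
    S.A.mulVecLin ∘ₗ state k + S.B.mulVecLin ∘ₗ LinearMap.proj k ∘ₗ LinearMap.snd ℝ _ _

/-- The output at time `k` as a linear function of the initial state and the input sequence. -/
def output (k : ℕ) : ((Fin S.n → ℝ) × (ℕ → Fin m → ℝ)) →ₗ[ℝ] (Fin p → ℝ) :=
  S.C.mulVecLin ∘ₗ S.state k + S.D.mulVecLin ∘ₗ LinearMap.proj k ∘ₗ LinearMap.snd ℝ _ _

lemma state_zero (x : Fin S.n → ℝ) (u : ℕ → Fin m → ℝ) : S.state 0 (x, u) = x := rfl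

lemma state_succ (k : ℕ) (x : Fin S.n → ℝ) (u : ℕ → Fin m → ℝ) :
    S.state (k + 1) (x, u) = S.A *ᵥ S.state k (x, u) + S.B *ᵥ u k := rfl

lemma output_apply (k : ℕ) (x : Fin S.n → ℝ) (u : ℕ → Fin m → ℝ) :
    S.output k (x, u) = S.C *ᵥ S.state k (x, u) + S.D *ᵥ u k := rfl

lemma state_congr {k : ℕ} (x : Fin S.n → ℝ) {u v : ℕ → Fin m → ℝ} (h : ∀ i < k, u i = v i) :
    S.state k (x, u) = S.state k (x, v) := by
  induction k with
  | zero => rfl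
  | succ k ih => rw [state_succ, state_succ, ih fun i hi ↦ h i (by omega), h k k.lt_succ_self]

lemma output_congr {k : ℕ} (x : Fin S.n → ℝ) {u v : ℕ → Fin m → ℝ} (h : ∀ i ≤ k, u i = v i) :
    S.output k (x, u) = S.output k (x, v) := by
  rw [output_apply, output_apply, S.state_congr x fun i hi ↦ h i hi.le, h k le_rfl]

lemma state_zero_input (k : ℕ) (x : Fin S.n → ℝ) : S.state k (x, 0) = S.A ^ k *ᵥ x := by
  induction k with
  | zero => simp [state_zero]
  | succ k ih => simp [state_succ, ih, pow_succ']

lemma output_zero_input (k : ℕ) (x : Fin S.n → ℝ) :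
    S.output k (x, 0) = S.C *ᵥ S.A ^ k *ᵥ x := by
  simp [output_apply, state_zero_input]

lemma state_succ_eq_state_shift (k : ℕ) (x : Fin S.n → ℝ) (u : ℕ → Fin m → ℝ) :
    S.state (k + 1) (x, u) = S.state k (S.state 1 (x, u), fun i ↦ u (i + 1)) := by
  induction k with
  | zero => rfl
  | succ k ih => rw [state_succ, ih, ← state_succ]

lemma output_succ_eq_output_shift (k : ℕ) (x : Fin S.n → ℝ) (u : ℕ → Fin m → ℝ) :
    S.output (k + 1) (x, u) = S.output k (S.state 1 (x, u), fun i ↦ u (i + 1)) := by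
  rw [output_apply, state_succ_eq_state_shift, ← output_apply]

lemma state_impulse (k j : ℕ) (w : Fin m → ℝ) :
    S.state (k + 1 + j) (0, Pi.single k w) = (S.A ^ j * S.B) *ᵥ w := by
  induction j with
  | zero =>
    have before : S.state k (0, Pi.single k w) = 0 := by
      rw [S.state_congr (v := 0) 0 fun i hi ↦ by simp [hi.ne], state_zero_input,
        mulVec_zero]
    simp [state_succ, before]
  | succ j ih =>
    rw [← add_assoc, state_succ, ih, Pi.single_eq_of_ne (by omega)]
    simp [pow_succ', Matrix.mul_assoc]

lemma output_impulse (k j : ℕ) (w : Fin m → ℝ) :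
    S.output (k + 1 + j) (0, Pi.single k w) = (S.C * S.A ^ j * S.B) *ᵥ w := by
  rw [output_apply, state_impulse, Pi.single_eq_of_ne (by omega), mulVec_zero, add_zero,
    mulVec_mulVec, Matrix.mul_assoc]

lemma eq_of_output_eq {k : ℕ} (hobs : S.unobservable k = ⊥) {x x' : Fin S.n → ℝ}
    {u : ℕ → Fin m → ℝ} (h : ∀ i < k, S.output i (x, u) = S.output i (x', u)) : x = x' := by
  rw [← sub_eq_zero, ← Submodule.mem_bot ℝ, ← hobs, mem_unobservable]
  intro i hi
  rw [← output_zero_input, ← sub_self u, ← Prod.mk_sub_mk, map_sub, h i hi, sub_self]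

end Trajectories

section RestrictedBehavior

/-- The input/output window of length `k` as a linear function of the initial state and the input
sequence. It is indexed like a column of `Hkt`, with the outputs stacked on top of the inputs. -/
def window (S : LinSys m p) (k : ℕ) :
    ((Fin S.n → ℝ) × (ℕ → Fin m → ℝ)) →ₗ[ℝ] ((Fin k × Fin p) ⊕ (Fin k × Fin m) → ℝ) :=
  LinearMap.pi <| Sum.elim (fun r ↦ LinearMap.proj r.2 ∘ₗ S.output r.1)
    (fun r ↦ LinearMap.proj r.2 ∘ₗ LinearMap.proj (r.1 : ℕ) ∘ₗ LinearMap.snd ℝ _ _)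

/-- The restricted behavior `𝔅_k`: the space of all input/output windows of length `k` of the
system. -/
def restrictedBehavior (S : LinSys m p) (k : ℕ) :
    Submodule ℝ ((Fin k × Fin p) ⊕ (Fin k × Fin m) → ℝ) :=
  LinearMap.range (S.window k)

lemma window_apply (S : LinSys m p) (k : ℕ) (x : Fin S.n → ℝ) (u : ℕ → Fin m → ℝ) :
    S.window k (x, u) = Sum.elim (fun r ↦ S.output r.1 (x, u) r.2) (fun r ↦ u r.1 r.2) := by
  ext (r | r) <;> rfl

lemma window_eq_window_iff {S₀ S : LinSys m p} {k : ℕ} {x₀ : Fin S₀.n → ℝ} {x : Fin S.n → ℝ}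
    {u v : ℕ → Fin m → ℝ} :
    S.window k (x, u) = S₀.window k (x₀, v) ↔
      (∀ i < k, S.output i (x, u) = S₀.output i (x₀, v)) ∧ ∀ i < k, u i = v i := by
  simp [window_apply, funext_iff, Fin.forall_iff]

lemma restrictedBehavior_le_iff {S₀ S : LinSys m p} {k : ℕ} :
    S₀.restrictedBehavior k ≤ S.restrictedBehavior k ↔
      ∀ (x₀ : Fin S₀.n → ℝ) (v : ℕ → Fin m → ℝ),
        ∃ x : Fin S.n → ℝ, ∀ i < k, S.output i (x, v) = S₀.output i (x₀, v) := by
  constructor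
  · intro h x₀ v
    obtain ⟨⟨x, u⟩, hxu⟩ := h ⟨(x₀, v), rfl⟩
    obtain ⟨hout, hin⟩ := window_eq_window_iff.1 hxu
    refine ⟨x, fun i hi ↦ ?_⟩
    rw [← hout i hi, S.output_congr x fun j hj ↦ (hin j (hj.trans_lt hi)).symm]
  · rintro h _ ⟨⟨x₀, v⟩, rfl⟩
    obtain ⟨x, hx⟩ := h x₀ v
    exact ⟨(x, v), window_eq_window_iff.2 ⟨hx, fun _ _ ↦ rfl⟩⟩

lemma restrictedBehavior_le_of_le {S₀ S : LinSys m p} {j k : ℕ} (hjk : j ≤ k)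
    (h : S₀.restrictedBehavior k ≤ S.restrictedBehavior k) :
    S₀.restrictedBehavior j ≤ S.restrictedBehavior j := by
  rw [restrictedBehavior_le_iff] at h ⊢
  intro x₀ v
  obtain ⟨x, hx⟩ := h x₀ v
  exact ⟨x, fun i hi ↦ hx i (hi.trans_le hjk)⟩

lemma finrank_restrictedBehavior_le (S : LinSys m p) (k : ℕ) :
    Module.finrank ℝ (S.restrictedBehavior k) ≤ k * m + (obsMat S k).rank := by
  let inputs : ((Fin k × Fin p) ⊕ (Fin k × Fin m) → ℝ) →ₗ[ℝ] (Fin k × Fin m → ℝ) :=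
    LinearMap.funLeft ℝ ℝ Sum.inr
  let unforced : (Fin k × Fin p → ℝ) →ₗ[ℝ] ((Fin k × Fin p) ⊕ (Fin k × Fin m) → ℝ) :=
    LinearMap.pi (Sum.elim LinearMap.proj 0)
  have unforced_le : S.restrictedBehavior k ⊓ LinearMap.ker inputs ≤
      (LinearMap.range (obsMat S k).mulVecLin).map unforced := by
    rintro _ ⟨⟨⟨x, u⟩, rfl⟩, hu⟩
    have hu0 : ∀ i < k, u i = 0 := fun i hi ↦ funext fun j ↦ congrFun hu (⟨i, hi⟩, j)
    refine ⟨_, ⟨x, rfl⟩, ?_⟩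
    rw [window_apply]
    ext (⟨i, j⟩ | ⟨i, j⟩)
    · rw [Sum.elim_inl,
        S.output_congr (v := 0) x fun i' hi' ↦ hu0 i' (hi'.trans_lt i.2), output_zero_input]
      exact S.obsMat_mulVec_apply k x (i, j)
    · exact (congrFun (hu0 i i.2) j).symm
  rw [← finrank_map_add_finrank_inf_ker inputs]
  gcongr
  · exact (Submodule.finrank_le _).trans (by simp)
  · exact (Submodule.finrank_mono unforced_le).trans (Submodule.finrank_map_le _ _)

lemma range_obsMat_le_of_restrictedBehavior_le {S₀ S : LinSys m p} {k : ℕ}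
    (h : S₀.restrictedBehavior k ≤ S.restrictedBehavior k) :
    LinearMap.range (obsMat S₀ k).mulVecLin ≤ LinearMap.range (obsMat S k).mulVecLin := by
  rintro _ ⟨x₀, rfl⟩
  obtain ⟨x, hx⟩ := restrictedBehavior_le_iff.1 h x₀ 0
  refine ⟨x, funext fun r ↦ ?_⟩
  simp only [mulVecLin_apply, obsMat_mulVec_apply, ← output_zero_input, hx r.1 r.1.2]

lemma rank_obsMat_le_of_restrictedBehavior_le {S₀ S : LinSys m p} {k : ℕ}
    (h : S₀.restrictedBehavior k ≤ S.restrictedBehavior k) :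
    (obsMat S₀ k).rank ≤ (obsMat S k).rank :=
  Submodule.finrank_mono (range_obsMat_le_of_restrictedBehavior_le h)

lemma lag_le_lag_of_restrictedBehavior_le {S₀ S : LinSys m p}
    (h : S₀.restrictedBehavior (lag S + 1) ≤ S.restrictedBehavior (lag S + 1)) :
    lag S₀ ≤ lag S := by
  refine S₀.lag_le_of_unobservable_succ_eq <|
    (S₀.unobservable_antitone (lag S).le_succ).antisymm fun x₀ hx₀ ↦ ?_
  obtain ⟨x, hx⟩ := restrictedBehavior_le_iff.1 h x₀ 0
  simp only [output_zero_input] at hx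
  have hxlag : x ∈ S.unobservable (lag S) := S.mem_unobservable.2 fun i hi ↦
    (hx i (by omega)).trans (S₀.mem_unobservable.1 hx₀ i hi)
  rw [← unobservable_lag_succ, mem_unobservable] at hxlag
  exact S₀.mem_unobservable.2 fun i hi ↦ (hx i hi).symm.trans (hxlag i hi)

lemma lag_add_le_of_restrictedBehavior_le {S₀ S : LinSys m p} {k : ℕ}
    (h : S₀.restrictedBehavior (k + 1) ≤ S.restrictedBehavior (k + 1))
    (hobs : S₀.unobservable (k + 1) = ⊥) (hk : lag S₀ ≤ k) :
    lag S + S₀.n ≤ S.n + lag S₀ := by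
  have lag_le : lag S₀ ≤ lag S := by
    rcases le_or_gt (lag S) k with hS | hS
    · exact lag_le_lag_of_restrictedBehavior_le (restrictedBehavior_le_of_le (by omega) h)
    · exact hk.trans hS.le
  calc lag S + S₀.n
      = lag S + (obsMat S₀ (lag S₀)).rank := by
        rw [S₀.unobservable_eq_bot_iff.1 (S₀.unobservable_eq_bot_of_lag_le hobs le_rfl)]
    _ ≤ lag S + (obsMat S (lag S₀)).rank := by
        gcongr
        exact rank_obsMat_le_of_restrictedBehavior_le (restrictedBehavior_le_of_le (by omega) h)
    _ ≤ S.n + lag S₀ := by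
        rw [add_comm]
        exact S.rank_obsMat_add_lag_le lag_le

lemma restrictedBehavior_le_succ {S₀ S : LinSys m p} {k : ℕ} (hobs : S.unobservable k = ⊥)
    (h : S₀.restrictedBehavior (k + 1) ≤ S.restrictedBehavior (k + 1)) :
    S₀.restrictedBehavior (k + 2) ≤ S.restrictedBehavior (k + 2) := by
  rw [restrictedBehavior_le_iff] at h ⊢
  intro x₀ v
  obtain ⟨x, hx⟩ := h x₀ v
  obtain ⟨z, hz⟩ := h (S₀.state 1 (x₀, v)) (fun i ↦ v (i + 1))
  have hzx : z = S.state 1 (x, v) := S.eq_of_output_eq hobs fun i hi ↦ by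
    rw [hz i (by omega), ← output_succ_eq_output_shift, ← output_succ_eq_output_shift,
      hx (i + 1) (by omega)]
  refine ⟨x, fun i hi ↦ ?_⟩
  cases i with
  | zero => exact hx 0 k.succ_pos
  | succ i =>
    rw [output_succ_eq_output_shift, ← hzx, hz i (by omega), ← output_succ_eq_output_shift]

lemma restrictedBehavior_le_of_unobservable_eq_bot {S₀ S : LinSys m p} {k : ℕ}
    (hobs : S.unobservable k = ⊥)
    (h : S₀.restrictedBehavior (k + 1) ≤ S.restrictedBehavior (k + 1)) (j : ℕ) :
    S₀.restrictedBehavior j ≤ S.restrictedBehavior j := by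
  refine restrictedBehavior_le_of_le (Nat.le_add_left j (k + 1)) ?_
  induction j with
  | zero => exact h
  | succ j ih =>
    rw [add_right_comm] at ih
    rw [← add_assoc, add_right_comm k 1 j]
    exact restrictedBehavior_le_succ (eq_bot_iff.2 <|
      (S.unobservable_antitone (Nat.le_add_right k j)).trans hobs.le) ih

lemma markov_eq_of_restrictedBehavior_le {S₀ S : LinSys m p} {k : ℕ}
    (hobs : S.unobservable k = ⊥)
    (h : S₀.restrictedBehavior (k + 1) ≤ S.restrictedBehavior (k + 1)) (j : ℕ) :
    S₀.C * S₀.A ^ j * S₀.B = S.C * S.A ^ j * S.B := by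
  refine ext_of_mulVec_single fun a ↦ ?_
  let impulse : ℕ → Fin m → ℝ := Pi.single k (Pi.single a 1)
  obtain ⟨x, hx⟩ := restrictedBehavior_le_iff.1
    (restrictedBehavior_le_of_unobservable_eq_bot hobs h (k + 1 + j + 1)) 0 impulse
  have hx0 : x = 0 := S.eq_of_output_eq hobs (u := 0) fun i hi ↦ by
    have impulse_eq_zero : ∀ i' ≤ i, impulse i' = (0 : ℕ → Fin m → ℝ) i' := fun i' hi' ↦
      Pi.single_eq_of_ne (by omega) _
    rw [← S.output_congr x impulse_eq_zero, hx i (by omega), S₀.output_congr 0 impulse_eq_zero,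
      output_zero_input, output_zero_input]
    simp
  rw [← output_impulse, ← output_impulse, ← hx _ (Nat.lt_succ_self _), hx0]

end RestrictedBehavior

lemma obsMat_mul_ctrlMat_apply (S : LinSys m p) {j k : ℕ} (r : Fin j × Fin p)
    (c : Fin k × Fin m) :
    (obsMat S j * ctrlMat S k) r c = (S.C * S.A ^ (r.1 + c.1 : ℕ) * S.B) r.2 c.2 := by
  rw [pow_add, ← Matrix.mul_assoc, Matrix.mul_assoc (S.C * S.A ^ (r.1 : ℕ))]
  rfl

lemma rank_obsMat_mul_ctrlMat_of_minimal {S : LinSys m p} (hS : MinimalSys S) :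
    (obsMat S S.n * ctrlMat S S.n).rank = S.n := by
  have hsurj : LinearMap.range (ctrlMat S S.n).mulVecLin = ⊤ :=
    Submodule.eq_top_of_finrank_eq (by rw [Module.finrank_fin_fun]; exact hS.1)
  rw [Matrix.rank, mulVecLin_mul, LinearMap.range_comp_of_range_eq_top _ hsurj]
  exact hS.2

lemma n_eq_and_minimal_of_markov_eq {S₀ S : LinSys m p} (hS : MinimalSys S)
    (hmarkov : ∀ j, S₀.C * S₀.A ^ j * S₀.B = S.C * S.A ^ j * S.B) (hle : S₀.n ≤ S.n) :
    S₀.n = S.n ∧ MinimalSys S₀ := by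
  have hrank : (obsMat S₀ S.n * ctrlMat S₀ S.n).rank = S.n := by
    have hprod : obsMat S₀ S.n * ctrlMat S₀ S.n = obsMat S S.n * ctrlMat S S.n := by
      ext r c
      rw [obsMat_mul_ctrlMat_apply, obsMat_mul_ctrlMat_apply, hmarkov]
    rw [hprod, rank_obsMat_mul_ctrlMat_of_minimal hS]
  have hobs : S.n ≤ (obsMat S₀ S.n).rank := hrank.ge.trans (rank_mul_le_left _ _)
  have hctrl : S.n ≤ (ctrlMat S₀ S.n).rank := hrank.ge.trans (rank_mul_le_right _ _)
  have hn : S₀.n = S.n := hle.antisymm (hobs.trans (S₀.rank_obsMat_le _))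
  rw [← hn] at hobs hctrl
  have hctrl' : (ctrlMat S₀ S₀.n).rank ≤ S₀.n := by
    simpa using (ctrlMat S₀ S₀.n).rank_le_card_height
  exact ⟨hn, hctrl'.antisymm hctrl, (S₀.rank_obsMat_le _).antisymm hobs⟩

section Data

variable {t : ℕ} {u : ℕ → Fin m → ℝ} {y : ℕ → Fin p → ℝ}

lemma state_eq_of_explainsWith {S : LinSys m p} {x : ℕ → Fin S.n → ℝ}
    (hx : ExplainsWith S t u y x) {c i : ℕ} (hi : c + i ≤ t) :
    S.state i (x c, fun j ↦ u (c + j)) = x (c + i) := by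
  induction i with
  | zero => rfl
  | succ i ih => rw [state_succ, ih (by omega), ← add_assoc, (hx (c + i) (by omega)).1]

lemma span_col_Hkt_le_restrictedBehavior {S : LinSys m p} (hS : Explains S t u y) (k : ℕ) :
    Submodule.span ℝ (Set.range (Hkt u y k t).col) ≤ S.restrictedBehavior (k + 1) := by
  obtain ⟨x, hx⟩ := hS
  rw [Submodule.span_le]
  rintro _ ⟨c, rfl⟩
  refine ⟨(x c, fun j ↦ u (c + j)), ?_⟩
  rw [window_apply]
  ext (⟨i, j⟩ | ⟨i, j⟩)
  · have hlt : (c : ℕ) + i < t := by omega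
    rw [Sum.elim_inl, output_apply, state_eq_of_explainsWith hx hlt.le, ← (hx _ hlt).2]
    simp [Hkt, hankel, add_comm]
  · simp [Hkt, hankel, add_comm]

variable {S₀ S : LinSys m p} {K : ℕ}

lemma restrictedBehavior_le_of_rank_Hkt (h₀ : Explains S₀ t u y)
    (hrank : (Hkt u y K t).rank = (K + 1) * m + S₀.n) (hS : Explains S t u y) :
    S₀.restrictedBehavior (K + 1) ≤ S.restrictedBehavior (K + 1) := by
  rw [← Submodule.eq_of_le_of_finrank_le (span_col_Hkt_le_restrictedBehavior h₀ K)]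
  · exact span_col_Hkt_le_restrictedBehavior hS K
  · rw [← rank_eq_finrank_span_cols, hrank]
    exact (S₀.finrank_restrictedBehavior_le _).trans
      (Nat.add_le_add_left (S₀.rank_obsMat_le _) _)

lemma unobservable_eq_bot_of_rank_Hkt (h₀ : Explains S₀ t u y)
    (hrank : (Hkt u y K t).rank = (K + 1) * m + S₀.n) : S₀.unobservable (K + 1) = ⊥ := by
  have h := Submodule.finrank_mono (span_col_Hkt_le_restrictedBehavior h₀ K)
  rw [← rank_eq_finrank_span_cols, hrank] at h
  rw [unobservable_eq_bot_iff]
  have := S₀.finrank_restrictedBehavior_le (K + 1)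
  have := S₀.rank_obsMat_le (K + 1)
  omega

lemma lag_eq_lMin_of_rank_Hkt (h₀ : Explains S₀ t u y)
    (hrank : (Hkt u y K t).rank = (K + 1) * m + S₀.n) (hK : lMin t u y ≤ K) :
    lag S₀ = lMin t u y := by
  obtain ⟨S₁, hS₁, hlag⟩ : ∃ S : LinSys m p, Explains S t u y ∧ lag S = lMin t u y :=
    Nat.sInf_mem (s := {ℓ | ∃ S : LinSys m p, Explains S t u y ∧ lag S = ℓ}) ⟨_, S₀, h₀, rfl⟩
  refine le_antisymm ?_ (Nat.sInf_le ⟨S₀, h₀, rfl⟩)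
  rw [← hlag]
  exact lag_le_lag_of_restrictedBehavior_le <|
    restrictedBehavior_le_of_le (by omega) (restrictedBehavior_le_of_rank_Hkt h₀ hrank hS₁)

lemma n_eq_and_minimal_of_rank_Hkt (h₀ : Explains S₀ t u y)
    (hrank : (Hkt u y K t).rank = (K + 1) * m + S₀.n) (hS : Explains S t u y)
    (hmin : MinimalSys S) (hK : lag S ≤ K) : S₀.n = S.n ∧ MinimalSys S₀ := by
  have hincl := restrictedBehavior_le_of_rank_Hkt h₀ hrank hS
  have hobs : S.unobservable K = ⊥ :=
    S.unobservable_eq_bot_of_lag_le (S.unobservable_eq_bot_iff.2 hmin.2) hK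
  refine n_eq_and_minimal_of_markov_eq hmin (markov_eq_of_restrictedBehavior_le hobs hincl) ?_
  calc S₀.n
      = (obsMat S₀ (K + 1)).rank :=
        (S₀.unobservable_eq_bot_iff.1 (unobservable_eq_bot_of_rank_Hkt h₀ hrank)).symm
    _ ≤ (obsMat S (K + 1)).rank := rank_obsMat_le_of_restrictedBehavior_le hincl
    _ ≤ S.n := S.rank_obsMat_le _

/-- The paper's `L_t^a`: the data-dependent sharpening of the prior bound `L` on the lag of the
explaining systems in `S_{L,N}`. The subtraction is meant for `nMin t u y ≤ N`. -/
noncomputable def lagBound (t L N : ℕ) (u : ℕ → Fin m → ℝ) (y : ℕ → Fin p → ℝ) : ℕ :=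
  min L (N - nMin t u y + lMin t u y)

variable {L N : ℕ}

lemma lMin_le_lagBound (hS : Explains S t u y) (hL : lag S ≤ L) :
    lMin t u y ≤ lagBound t L N u y :=
  have hle : lMin t u y ≤ lag S := Nat.sInf_le ⟨S, hS, rfl⟩
  le_min (hle.trans hL) (Nat.le_add_left _ _)

lemma lag_le_lagBound (h₀ : Explains S₀ t u y) (hn₀ : S₀.n = nMin t u y)
    (hrank : (Hkt u y (lagBound t L N u y) t).rank = (lagBound t L N u y + 1) * m + nMin t u y)
    (hS : Explains S t u y) (hSLN : S ∈ SLN m p L N) : lag S ≤ lagBound t L N u y := by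
  rw [← hn₀] at hrank
  have hlMin := lMin_le_lagBound (N := N) hS hSLN.1
  have hlag₀ := lag_eq_lMin_of_rank_Hkt h₀ hrank hlMin
  have hsurplus := lag_add_le_of_restrictedBehavior_le
    (restrictedBehavior_le_of_rank_Hkt h₀ hrank hS) (unobservable_eq_bot_of_rank_Hkt h₀ hrank)
    (hlag₀.trans_le hlMin)
  have hN : S.n ≤ N := hSLN.2
  exact le_min hSLN.1 (by omega)

lemma n_eq_and_minimal_of_mem_SLN (h₀ : Explains S₀ t u y) (hn₀ : S₀.n = nMin t u y)
    (hrank : (Hkt u y (lagBound t L N u y) t).rank = (lagBound t L N u y + 1) * m + nMin t u y)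
    (hS : S ∈ ExplSet t u y ∩ Mset m p ∩ SLN m p L N) :
    S.n = nMin t u y ∧ MinimalSys S₀ := by
  obtain ⟨⟨hexpl, hmin⟩, hSLN⟩ := hS
  have hK := lag_le_lagBound h₀ hn₀ hrank hexpl hSLN
  rw [← hn₀] at hrank ⊢
  exact (n_eq_and_minimal_of_rank_Hkt h₀ hrank hexpl hmin hK).imp_left Eq.symm

end Data

end LinSys

/-- **Theorem 1 (consequences).** If the informativity conditions hold, then
`ℓ_true = ℓ_min,t`, `n_true = n_min,t`, and
`ℰ_t ∩ M ∩ S_{L,N} = ℰ_t(n_min,t)`. -/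
theorem informative_consequences {m p : ℕ} (hm : 1 ≤ m) (hp : 1 ≤ p)
    (t L N : ℕ) (u : ℕ → Fin m → ℝ) (y : ℕ → Fin p → ℝ)
    (hu : ∃ s < t, u s ≠ 0)
    (sysT : LinSys m p) (hmin : MinimalSys sysT) (hdata : Explains sysT t u y)
    (hL : lag sysT ≤ L) (hN : sysT.n ≤ N)
    (hlen : min L (N - nMin t u y + lMin t u y) +
        (min L (N - nMin t u y + lMin t u y) + 1) * m + nMin t u y ≤ t)
    (hrank : (Hkt u y (min L (N - nMin t u y + lMin t u y)) t).rank =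
        (min L (N - nMin t u y + lMin t u y) + 1) * m + nMin t u y) :
    lag sysT = lMin t u y ∧ sysT.n = nMin t u y ∧
      ExplSet t u y ∩ Mset m p ∩ SLN m p L N =
        {sys ∈ ExplSet t u y | sys.n = nMin t u y} := by
  have hT : sysT ∈ ExplSet t u y ∩ Mset m p ∩ SLN m p L N := ⟨⟨hdata, hmin⟩, hL, hN⟩
  obtain ⟨S₀, h₀, hn₀⟩ : ∃ S : LinSys m p, Explains S t u y ∧ S.n = nMin t u y :=
    Nat.sInf_mem (s := {n | ∃ S : LinSys m p, Explains S t u y ∧ S.n = n}) ⟨_, sysT, hdata, rfl⟩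
  have n_eq : ∀ S ∈ ExplSet t u y ∩ Mset m p ∩ SLN m p L N, S.n = nMin t u y := fun _ hS ↦
    (LinSys.n_eq_and_minimal_of_mem_SLN h₀ hn₀ hrank hS).1
  have minimal : ∀ S ∈ ExplSet t u y, S.n = nMin t u y → MinimalSys S := fun _ hS hn ↦
    (LinSys.n_eq_and_minimal_of_mem_SLN hS hn hrank hT).2
  have lag_eq : ∀ S ∈ ExplSet t u y, S.n = nMin t u y → lag S = lMin t u y := fun _ hS hn ↦
    LinSys.lag_eq_lMin_of_rank_Hkt hS (by rw [hn]; exact hrank) (LinSys.lMin_le_lagBound hdata hL)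
  have hlagT := lag_eq sysT hdata (n_eq sysT hT)
  refine ⟨hlagT, n_eq sysT hT, Set.Subset.antisymm (fun S hS ↦ ⟨hS.1.1, n_eq S hS⟩) ?_⟩
  rintro S ⟨hS, hn⟩
  exact ⟨⟨hS, minimal S hS hn⟩, (lag_eq S hS hn).trans_le (hlagT.ge.trans hL),
    hn.trans_le ((n_eq sysT hT).ge.trans hN)⟩
end

section
/- Let t ≥ 2 and k ≥ 1, and let (u_{[0,t−1]}, y_{[0,t−1]}) be data with u(s) ∈ ℝ^m and y(s) ∈ ℝ^p. The map sending a row vector (ξ_y, ξ_u) in the left kernel of H_{k−1,t} (with ξ_y of length kp acting on the output block rows and ξ_u of length km acting on the input block rows) to the row vector (ξ_y, ξ_u, 0_m) — where the m appended zeros act on the last input block row u_{[k,t−1]} of G_{k,t} — injectively maps the left kernel of H_{k−1,t} into the left kernel of G_{k,t}; moreover, rank G_{k,t} = m + rank H_{k−1,t} if and only if this map is surjective onto the left kernel of G_{k,t}. -/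
open Matrix

/-- The map appending `m` zeros (acting on the last input block row of
`G_{k,t}`) to a left-kernel row vector of `H_{k-1,t}`.  Here `k = j + 1 ≥ 1`,
so `H_{k-1,t} = Hkt u y j t` and `G_{k,t} = Gkt u y (j+1) t`. -/
def extendKernelVec {m p : ℕ} (j : ℕ)
    (ξ : ((Fin (j + 1) × Fin p) ⊕ (Fin (j + 1) × Fin m)) → ℝ) :
    ((Fin (j + 1) × Fin p) ⊕ (Fin (j + 2) × Fin m)) → ℝ :=
  Sum.elim (fun r => ξ (Sum.inl r))
    (fun r => if h : (r.1 : ℕ) < j + 1 then ξ (Sum.inr (⟨r.1, h⟩, r.2)) else 0)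

/-!
Deleting the last input block row of `G_{k,t}` leaves `H_{k-1,t}` without its last column, so
appending `m` zeros maps the left kernel of `H_{k-1,t}` injectively into that of `G_{k,t}`. An
injective linear map between finite-dimensional spaces is onto iff the dimensions agree, and by
rank–nullity the two left kernels have dimensions `kp + km - rank H_{k-1,t}` and
`kp + (k+1)m - rank G_{k,t}`.
-/

section LeftKernel

variable {ι ι' κ κ' : Type*} [Fintype ι] [Fintype ι']

/-- The left kernel `{x | xᵀ M = 0}` of a matrix, as a submodule of the space of row vectors. -/
def leftKernel {R : Type*} [Semiring R] (M : Matrix ι κ R) : Submodule R (ι → R) :=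
  LinearMap.ker M.vecMulLinear

theorem mem_leftKernel {R : Type*} [Semiring R] {M : Matrix ι κ R} {x : ι → R} :
    x ∈ leftKernel M ↔ x ᵥ* M = 0 :=
  LinearMap.mem_ker

theorem finrank_leftKernel_add_rank {K : Type*} [Field K] [Fintype κ] (M : Matrix ι κ K) :
    Module.finrank K (leftKernel M) + M.rank = Fintype.card ι := by
  rw [← M.rank_transpose, Matrix.rank, Matrix.mulVecLin_transpose, add_comm, leftKernel,
    LinearMap.finrank_range_add_finrank_ker, Module.finrank_fintype_fun_eq_card]

theorem finrank_eq_iff_surjOn {K V W : Type*} [DivisionRing K] [AddCommGroup V] [Module K V]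
    [AddCommGroup W] [Module K W] {f : V →ₗ[K] W} (hf : Function.Injective f)
    {P : Submodule K V} {Q : Submodule K W} [FiniteDimensional K Q] (hPQ : Set.MapsTo f P Q) :
    Module.finrank K P = Module.finrank K Q ↔ Set.SurjOn f P Q := by
  have hle : P.map f ≤ Q := Submodule.map_le_iff_le_comap.mpr hPQ
  rw [(Submodule.equivMapOfInjective f hf P).finrank_eq]
  exact ⟨fun h => (Submodule.eq_of_le_of_finrank_eq hle h).ge,
    fun h => congrArg (fun S : Submodule K W => Module.finrank K S) (hle.antisymm h)⟩

theorem rank_add_card_eq_iff_surjOn_leftKernel {K : Type*} [Field K] [Fintype κ] [Fintype κ']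
    {M : Matrix ι κ K} {N : Matrix ι' κ' K} {f : (ι → K) →ₗ[K] (ι' → K)}
    (hf : Function.Injective f) (hMN : Set.MapsTo f (leftKernel M) (leftKernel N)) :
    N.rank + Fintype.card ι = M.rank + Fintype.card ι' ↔
      Set.SurjOn f (leftKernel M) (leftKernel N) := by
  rw [← finrank_eq_iff_surjOn hf hMN, ← finrank_leftKernel_add_rank M,
    ← finrank_leftKernel_add_rank N]
  omega

theorem extend_zero_vecMul {R : Type*} [NonUnitalNonAssocSemiring R] {e : ι → ι'}
    (he : Function.Injective e) (x : ι → R) (M : Matrix ι' κ R) :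
    Function.extend e x 0 ᵥ* M = x ᵥ* M.submatrix e id := by
  ext c
  refine (Fintype.sum_of_injective e he _ _ (fun i hi => ?_) fun i => ?_).symm
  · rw [Function.extend_apply' _ _ _ hi, Pi.zero_apply, zero_mul]
  · simp only [he.extend_apply, submatrix_apply, id]

end LeftKernel

section Hankel

variable {m p : ℕ}

/-- The inclusion of the rows of `H_{k-1,t}` into those of `G_{k,t}`, where `k = j + 1`; its image
misses exactly the last input block row. -/
def rowInclusion (m p j : ℕ) :
    (Fin (j + 1) × Fin p) ⊕ (Fin (j + 1) × Fin m) →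
      (Fin (j + 1) × Fin p) ⊕ (Fin (j + 2) × Fin m) :=
  Sum.map id (Prod.map Fin.castSucc id)

theorem rowInclusion_injective (m p j : ℕ) : Function.Injective (rowInclusion m p j) :=
  Function.injective_id.sumMap ((Fin.castSucc_injective _).prodMap Function.injective_id)

theorem extendKernelVec_eq_extend (j : ℕ) (ξ : (Fin (j + 1) × Fin p) ⊕ (Fin (j + 1) × Fin m) → ℝ) :
    extendKernelVec j ξ = Function.extend (rowInclusion m p j) ξ 0 := by
  have extend_rowInclusion := (rowInclusion_injective m p j).extend_apply ξ 0
  ext (r | ⟨i, a⟩)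
  · exact (extend_rowInclusion (Sum.inl r)).symm
  · cases i using Fin.lastCases with
    | cast i =>
      refine Eq.trans ?_ (extend_rowInclusion (Sum.inr (i, a))).symm
      simp only [extendKernelVec, Sum.elim_inr, Fin.val_castSucc, Fin.is_lt, dif_pos, Fin.eta]
    | last =>
      have not_mem_range : ¬∃ r, rowInclusion m p j r = Sum.inr (Fin.last (j + 1), a) := by
        rintro ⟨_ | ⟨i, b⟩, h⟩ <;> simp [rowInclusion, Fin.castSucc_ne_last] at h
      rw [Function.extend_apply' _ _ _ not_mem_range]
      simp [extendKernelVec]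

theorem Gkt_submatrix_rowInclusion (t j : ℕ) (u : ℕ → Fin m → ℝ) (y : ℕ → Fin p → ℝ) :
    (Gkt u y (j + 1) t).submatrix (rowInclusion m p j) id =
      (Hkt u y j t).submatrix id (Fin.castLE (Nat.sub_le_sub_left j.le_succ t)) := by
  ext (r | r) c <;> rfl

theorem extendKernelVec_vecMul_Gkt (t j : ℕ) (u : ℕ → Fin m → ℝ) (y : ℕ → Fin p → ℝ)
    (ξ : (Fin (j + 1) × Fin p) ⊕ (Fin (j + 1) × Fin m) → ℝ) :
    extendKernelVec j ξ ᵥ* Gkt u y (j + 1) t =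
      (ξ ᵥ* Hkt u y j t) ∘ Fin.castLE (Nat.sub_le_sub_left j.le_succ t) := by
  rw [extendKernelVec_eq_extend, extend_zero_vecMul (rowInclusion_injective m p j),
    Gkt_submatrix_rowInclusion]
  rfl

theorem extendKernelVec_mem_leftKernel {t j : ℕ} {u : ℕ → Fin m → ℝ} {y : ℕ → Fin p → ℝ}
    {ξ : (Fin (j + 1) × Fin p) ⊕ (Fin (j + 1) × Fin m) → ℝ} (hξ : ξ ∈ leftKernel (Hkt u y j t)) :
    extendKernelVec j ξ ∈ leftKernel (Gkt u y (j + 1) t) := by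
  rw [mem_leftKernel] at hξ ⊢
  rw [extendKernelVec_vecMul_Gkt, hξ, Pi.zero_comp]

end Hankel

/-- With `k := j + 1 ≥ 1`: the map `(ξ_y, ξ_u) ↦ (ξ_y, ξ_u, 0_m)` injectively
maps the left kernel of `H_{k-1,t}` into the left kernel of `G_{k,t}`, and
`rank G_{k,t} = m + rank H_{k-1,t}` iff this map is surjective onto the left
kernel of `G_{k,t}`. -/
theorem leftKernel_extension {m p : ℕ} (t j : ℕ) (ht : 2 ≤ t)
    (u : ℕ → Fin m → ℝ) (y : ℕ → Fin p → ℝ) :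
    (∀ ξ, ξ ᵥ* Hkt u y j t = 0 →
        extendKernelVec j ξ ᵥ* Gkt u y (j + 1) t = 0) ∧
    Set.InjOn (extendKernelVec (m := m) (p := p) j)
      {ξ | ξ ᵥ* Hkt u y j t = 0} ∧
    ((Gkt u y (j + 1) t).rank = m + (Hkt u y j t).rank ↔
      ∀ η, η ᵥ* Gkt u y (j + 1) t = 0 →
        ∃ ξ, ξ ᵥ* Hkt u y j t = 0 ∧ extendKernelVec j ξ = η) := by
  have hext : extendKernelVec j = Function.ExtendByZero.linearMap ℝ (rowInclusion m p j) :=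
    funext (extendKernelVec_eq_extend j)
  have hinj : Function.Injective (Function.ExtendByZero.linearMap ℝ (rowInclusion m p j)) :=
    Function.extend_injective (rowInclusion_injective m p j) 0
  refine ⟨fun _ => extendKernelVec_mem_leftKernel, (hext ▸ hinj).injOn, ?_⟩
  have hmaps : Set.MapsTo (Function.ExtendByZero.linearMap ℝ (rowInclusion m p j))
      (leftKernel (Hkt u y j t)) (leftKernel (Gkt u y (j + 1) t)) :=
    hext ▸ fun _ => extendKernelVec_mem_leftKernel
  rw [hext]
  refine Iff.trans ?_ (rank_add_card_eq_iff_surjOn_leftKernel hinj hmaps)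
  simp only [Fintype.card_sum, Fintype.card_prod, Fintype.card_fin, add_mul]
  omega
end

section
/- (Theorem 2, existence of a shortest informative experiment.) Let (A_true, B_true, C_true, D_true) be a minimal discrete-time linear system with n_true states, m inputs, p outputs, and lag ℓ_true, let L and N satisfy ℓ_true ≤ L and n_true ≤ N, and let x_0 ∈ ℝ^{n_true} be an arbitrary initial state. Set L^a := min(L, N − n_true + ℓ_true) and T := L^a + (L^a+1)m + n_true. Then there exists an input sequence u(0),...,u(T−1) ∈ ℝ^m such that the data (u_{[0,T−1]}, y_{[0,T−1]}), where y is the output of the true system starting from x(0) = x_0 under this input, are informative for system identification. -/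
/-!
Write `K` for `min L (N - n + ℓ)`, where `n` and `ℓ` are the order and lag of the true system.

*Input design.* A window is a state together with the next `K + 1` inputs, a vector of dimension
`n + (K + 1) m`. Controllability of the system makes the dynamics of windows controllable, with the
newest input as control. In a controllable system the inputs can be chosen one after the other so
that the states visited are linearly independent until they span: a step at which no input leaves
the span `W` of the previous states would make `W` invariant and contain the range of the input
map. An experiment of length `K + (K + 1) m + n` can therefore produce a basis of the space of
windows.

*Identification.* As the windows span, every response of the true system up to time `K` is a
response of any explaining system. Comparing the ranks of the observability matrices with `ℓ` block
rows, and using that the rank grows with each block row up to the lag, an explaining system with at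
most `N` states and lag at most `L` has lag at most `K`. So in both systems the state is determined
by `K` free outputs: the Markov parameters agree, and matching free responses defines a linear map
between the state spaces that intertwines the two systems.
-/

open Matrix

/-! ### Reachability and linearly independent orbits -/

section Reachability

variable {R V U : Type*} [Ring R] [AddCommGroup V] [Module R V] [AddCommGroup U] [Module R U]

/-- Reachability of the dynamics `c ↦ F c + e` with inputs `e ∈ E`: no proper `F`-invariant subspace
contains `E`. -/
def IsReachable (F : Module.End R V) (E : Submodule R V) : Prop :=
  ∀ W ∈ F.invtSubmodule, E ≤ W → W = ⊤

/-- The sequences produced by the dynamics `c ↦ F c + e` with inputs `e ∈ E`. The input is added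
after `F` acts, and `a` is the value of `c 0` before its input is added. -/
structure IsControlledOrbit (F : Module.End R V) (E : Submodule R V) (a : V) (c : ℕ → V) :
    Prop where
  zero_sub_mem : c 0 - a ∈ E
  succ_sub_mem : ∀ t, c (t + 1) - F (c t) ∈ E

lemma IsControlledOrbit.add_impulse {F : Module.End R V} {E : Submodule R V} {a : V} {c : ℕ → V}
    (h : IsControlledOrbit F E a c) (t : ℕ) {e : V} (he : e ∈ E) :
    IsControlledOrbit F E a fun s => if s < t then c s else c s + (F ^ (s - t)) e where
  zero_sub_mem := by
    rcases t.eq_zero_or_pos with rfl | ht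
    · simpa [add_sub_right_comm] using E.add_mem h.zero_sub_mem he
    · simpa [ht] using h.zero_sub_mem
  succ_sub_mem s := by
    rcases lt_trichotomy (s + 1) t with hs | rfl | hs
    · simpa [hs, Nat.lt_of_succ_lt hs] using h.succ_sub_mem s
    · simpa [add_sub_right_comm] using E.add_mem (h.succ_sub_mem s) he
    · have hpow : (F ^ (s + 1 - t)) e = F ((F ^ (s - t)) e) := by
        rw [Nat.sub_add_comm (Nat.le_of_lt_succ hs), pow_succ', Module.End.mul_apply]
      simpa [hs.not_gt, (Nat.le_of_lt_succ hs).not_gt, hpow] using h.succ_sub_mem s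

/-- The dynamics of `(x, w)`, where `w` queues the next `K + 1` inputs of `x ↦ F x + G u`: one step
consumes `w 0` and queues a zero at the end. -/
def windowShift (F : Module.End R V) (G : U →ₗ[R] V) (K : ℕ) :
    Module.End R (V × (Fin (K + 1) → U)) :=
  (F ∘ₗ LinearMap.fst R V (Fin (K + 1) → U) +
      G ∘ₗ LinearMap.proj 0 ∘ₗ LinearMap.snd R V (Fin (K + 1) → U)).prod
    (LinearMap.pi (Fin.lastCases (motive := fun _ => (Fin (K + 1) → U) →ₗ[R] U) 0
      fun j => LinearMap.proj j.succ) ∘ₗ LinearMap.snd R V (Fin (K + 1) → U))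

variable (R V U) in
/-- The inputs of the dynamics `windowShift`: windows that vanish outside the last queued input. -/
def newestInput (K : ℕ) : Submodule R (V × (Fin (K + 1) → U)) :=
  LinearMap.range (LinearMap.inr R V (Fin (K + 1) → U) ∘ₗ
    LinearMap.single R (fun _ => U) (Fin.last K))

variable {F : Module.End R V} {G : U →ₗ[R] V} {K : ℕ}

lemma windowShift_fst (c : V × (Fin (K + 1) → U)) :
    (windowShift F G K c).1 = F c.1 + G (c.2 0) := rfl

lemma windowShift_snd_castSucc (c : V × (Fin (K + 1) → U)) (j : Fin K) :
    (windowShift F G K c).2 j.castSucc = c.2 j.succ := by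
  simp [windowShift]

lemma windowShift_snd_last (c : V × (Fin (K + 1) → U)) :
    (windowShift F G K c).2 (Fin.last K) = 0 := by
  simp [windowShift]

lemma windowShift_single_succ (j : Fin K) (v : U) :
    windowShift F G K (0, Pi.single j.succ v) = (0, Pi.single j.castSucc v) := by
  ext i
  · simp [windowShift_fst]
  · induction i using Fin.lastCases with
    | last => simp [windowShift_snd_last]
    | cast i => simp [windowShift_snd_castSucc, Pi.single_apply]

lemma windowShift_state_single_zero (x : V) (v : U) :
    windowShift F G K (x, Pi.single 0 v) = (F x + G v, 0) := by
  ext i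
  · simp [windowShift_fst]
  · induction i using Fin.lastCases with
    | last => simp [windowShift_snd_last]
    | cast i => simp [windowShift_snd_castSucc]

/-- Shifting the newest input through the queue reaches every queued input, then the range of `G`,
then every state. -/
lemma IsReachable.windowShift (h : IsReachable F (LinearMap.range G)) (K : ℕ) :
    IsReachable (windowShift F G K) (newestInput R V U K) := by
  intro W hW hE
  have hinput : ∀ (i : Fin (K + 1)) (v : U), ((0, Pi.single i v) : V × (Fin (K + 1) → U)) ∈ W := by
    intro i
    induction i using Fin.reverseInduction with
    | last => exact fun v => hE ⟨v, rfl⟩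
    | cast j ih => exact fun v => by simpa [windowShift_single_succ] using hW (ih v)
  have hstate : W.comap (LinearMap.inl R V (Fin (K + 1) → U)) = ⊤ := by
    refine h _ (fun x hx => ?_) ?_
    · have hmem : (x, Pi.single 0 0) ∈ W := by simpa using hx
      have hstep := hW hmem
      rw [Submodule.mem_comap, windowShift_state_single_zero] at hstep
      simpa using hstep
    · rintro _ ⟨v, rfl⟩
      simpa [windowShift_state_single_zero] using hW (hinput 0 v)
  have hqueue : W.comap (LinearMap.inr R V (Fin (K + 1) → U)) = ⊤ := by
    refine eq_top_iff.2 fun w _ => ?_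
    rw [← Finset.univ_sum_single w]
    exact Submodule.sum_mem _ fun i _ => hinput i (w i)
  refine eq_top_iff.2 fun c _ => ?_
  have hx : c.1 ∈ W.comap (LinearMap.inl R V (Fin (K + 1) → U)) := hstate ▸ Submodule.mem_top
  have hw : c.2 ∈ W.comap (LinearMap.inr R V (Fin (K + 1) → U)) := hqueue ▸ Submodule.mem_top
  simpa using W.add_mem hx hw

section Windows

variable {a : V} {c : ℕ → V × (Fin (K + 1) → U)}

lemma IsControlledOrbit.window_fst_zero
    (h : IsControlledOrbit (windowShift F G K) (newestInput R V U K) (a, 0) c) : (c 0).1 = a := by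
  obtain ⟨v, hv⟩ := h.zero_sub_mem
  exact sub_eq_zero.1 (congrArg Prod.fst hv).symm

lemma IsControlledOrbit.window_fst_succ {c₀ : V × (Fin (K + 1) → U)}
    (h : IsControlledOrbit (windowShift F G K) (newestInput R V U K) c₀ c) (t : ℕ) :
    (c (t + 1)).1 = F (c t).1 + G ((c t).2 0) := by
  obtain ⟨v, hv⟩ := h.succ_sub_mem t
  rw [← windowShift_fst]
  exact sub_eq_zero.1 (congrArg Prod.fst hv).symm

lemma IsControlledOrbit.window_snd {c₀ : V × (Fin (K + 1) → U)}
    (h : IsControlledOrbit (windowShift F G K) (newestInput R V U K) c₀ c) (t : ℕ)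
    (i : Fin (K + 1)) : (c t).2 i = (c (t + i)).2 0 := by
  have hshift : ∀ (t : ℕ) (j : Fin K), (c (t + 1)).2 j.castSucc = (c t).2 j.succ := by
    intro t j
    obtain ⟨v, hv⟩ := h.succ_sub_mem t
    have hcoord := congrFun (congrArg Prod.snd hv) j.castSucc
    exact sub_eq_zero.1 (by simpa [windowShift_snd_castSucc] using hcoord.symm)
  induction i using Fin.induction generalizing t with
  | zero => rfl
  | succ j ih => rw [← hshift, ih, Fin.val_succ, Fin.val_castSucc, add_right_comm, add_assoc]

end Windows

end Reachability

/-- If no input at time `t` made the new vector independent of the earlier ones, their span would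
contain `E` and be `F`-invariant. -/
lemma IsReachable.exists_linearIndependent_orbit {k V : Type*} [DivisionRing k] [AddCommGroup V]
    [Module k V] {F : Module.End k V} {E : Submodule k V} (h : IsReachable F E) (a : V) {t : ℕ}
    (ht : t ≤ Module.finrank k V) :
    ∃ c, IsControlledOrbit F E a c ∧ LinearIndependent k fun s : Fin t => c s := by
  induction t with
  | zero =>
    refine ⟨fun s => (F ^ s) a, ⟨by simp, fun s => ?_⟩, linearIndependent_empty_type⟩
    simp [pow_succ']
  | succ t ih =>
    obtain ⟨c, hc, hli⟩ := ih (Nat.le_of_succ_le ht)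
    set W := Submodule.span k (Set.range fun s : Fin t => c s)
    have hcW : ∀ s < t, c s ∈ W := fun s hs => Submodule.subset_span ⟨⟨s, hs⟩, rfl⟩
    obtain ⟨e, he, hnew⟩ : ∃ e ∈ E, c t + e ∉ W := by
      by_contra! hall
      have hct : c t ∈ W := by simpa using hall 0 E.zero_mem
      have hE : E ≤ W := fun e he => by simpa using W.sub_mem (hall e he) hct
      have hinv : W ∈ F.invtSubmodule := by
        refine (Submodule.span_le (p := W.comap F)).2 ?_
        rintro _ ⟨s, rfl⟩
        have hsucc : c (s + 1) ∈ W := by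
          rcases (Nat.succ_le_of_lt s.2).lt_or_eq with hs | hs
          · exact hcW _ hs
          · rwa [← hs] at hct
        simpa using W.sub_mem hsucc (hE (hc.succ_sub_mem s))
      have hdim : Module.finrank k W = t := by simpa using finrank_span_eq_card hli
      rw [h W hinv hE, finrank_top] at hdim
      exact Nat.not_succ_le_self t (hdim ▸ ht)
    refine ⟨_, hc.add_impulse t he, linearIndependent_finSucc'.2 ?_⟩
    have hinit : (Fin.init fun s : Fin (t + 1) =>
        if (s : ℕ) < t then c s else c s + (F ^ ((s : ℕ) - t)) e) = fun s : Fin t => c s := by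
      funext s
      simp [Fin.init]
    rw [hinit]
    exact ⟨hli, by simpa using hnew⟩

/-! ### Responses of a system -/

section Systems

variable {m p : ℕ}

/-- The state at time `k`, as a linear function of the initial state and the input sequence. -/
def LinSys.stateAt (sys : LinSys m p) :
    ℕ → (Fin sys.n → ℝ) × (ℕ → Fin m → ℝ) →ₗ[ℝ] Fin sys.n → ℝ
  | 0 => LinearMap.fst ℝ _ _
  | k + 1 => sys.A.mulVecLin ∘ₗ sys.stateAt k +
      sys.B.mulVecLin ∘ₗ LinearMap.proj k ∘ₗ LinearMap.snd ℝ _ _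

/-- The output at time `k`, as a linear function of the initial state and the input sequence. -/
def LinSys.outputAt (sys : LinSys m p) (k : ℕ) :
    (Fin sys.n → ℝ) × (ℕ → Fin m → ℝ) →ₗ[ℝ] Fin p → ℝ :=
  sys.C.mulVecLin ∘ₗ sys.stateAt k + sys.D.mulVecLin ∘ₗ LinearMap.proj k ∘ₗ LinearMap.snd ℝ _ _

/-- The Markov parameters `D, CB, CAB, CA²B, …`. -/
def LinSys.markov (sys : LinSys m p) : ℕ → Matrix (Fin p) (Fin m) ℝ
  | 0 => sys.D
  | k + 1 => sys.C * sys.A ^ k * sys.B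

variable {sys s1 s2 s3 : LinSys m p}

lemma LinSys.stateAt_succ (x : Fin sys.n → ℝ) (u : ℕ → Fin m → ℝ) (k : ℕ) :
    sys.stateAt (k + 1) (x, u) = sys.A *ᵥ sys.stateAt k (x, u) + sys.B *ᵥ u k := rfl

lemma LinSys.outputAt_apply (x : Fin sys.n → ℝ) (u : ℕ → Fin m → ℝ) (k : ℕ) :
    sys.outputAt k (x, u) = sys.C *ᵥ sys.stateAt k (x, u) + sys.D *ᵥ u k := rfl

lemma LinSys.stateAt_congr (x : Fin sys.n → ℝ) {u w : ℕ → Fin m → ℝ} {k : ℕ}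
    (h : ∀ i < k, u i = w i) : sys.stateAt k (x, u) = sys.stateAt k (x, w) := by
  induction k with
  | zero => rfl
  | succ k ih =>
    rw [stateAt_succ, stateAt_succ, ih fun i hi => h i (hi.trans k.lt_succ_self),
      h k k.lt_succ_self]

lemma LinSys.outputAt_congr (x : Fin sys.n → ℝ) {u w : ℕ → Fin m → ℝ} {k : ℕ}
    (h : ∀ i ≤ k, u i = w i) : sys.outputAt k (x, u) = sys.outputAt k (x, w) := by
  rw [outputAt_apply, outputAt_apply, stateAt_congr x fun i hi => h i hi.le, h k le_rfl]

lemma LinSys.stateAt_free (x : Fin sys.n → ℝ) (k : ℕ) :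
    sys.stateAt k (x, 0) = sys.A ^ k *ᵥ x := by
  induction k with
  | zero => simp [stateAt]
  | succ k ih => simp [stateAt_succ, ih, pow_succ']

lemma LinSys.outputAt_free (x : Fin sys.n → ℝ) (k : ℕ) :
    sys.outputAt k (x, 0) = (sys.C * sys.A ^ k) *ᵥ x := by
  simp [outputAt_apply, stateAt_free]

lemma LinSys.outputAt_eq_free_add_forced (x : Fin sys.n → ℝ) (u : ℕ → Fin m → ℝ) (k : ℕ) :
    sys.outputAt k (x, u) = (sys.C * sys.A ^ k) *ᵥ x + sys.outputAt k (0, u) := by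
  rw [← outputAt_free, ← map_add, Prod.mk_add_mk, add_zero, zero_add]

lemma LinSys.stateAt_impulse_of_le {j k : ℕ} (hk : k ≤ j) (v : Fin m → ℝ) :
    sys.stateAt k (0, Pi.single j v) = 0 := by
  have hzero : ∀ i < k, (Pi.single j v : ℕ → Fin m → ℝ) i = 0 := fun i hi => by
    simp [(hi.trans_le hk).ne]
  rw [stateAt_congr 0 (w := 0) hzero]
  exact map_zero _

lemma LinSys.outputAt_impulse_of_lt {j k : ℕ} (hk : k < j) (v : Fin m → ℝ) :
    sys.outputAt k (0, Pi.single j v) = 0 := by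
  simp [outputAt_apply, stateAt_impulse_of_le hk.le, hk.ne]

lemma LinSys.stateAt_impulse_add_succ (j i : ℕ) (v : Fin m → ℝ) :
    sys.stateAt (j + i + 1) (0, Pi.single j v) = (sys.A ^ i * sys.B) *ᵥ v := by
  induction i with
  | zero => simp [stateAt_succ, stateAt_impulse_of_le le_rfl]
  | succ i ih =>
    have hi : j + i + 1 ≠ j := by omega
    rw [← add_assoc, stateAt_succ, ih, Pi.single_eq_of_ne hi, mulVec_zero, add_zero, mulVec_mulVec,
      pow_succ', Matrix.mul_assoc]

lemma LinSys.outputAt_impulse_add (j i : ℕ) (v : Fin m → ℝ) :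
    sys.outputAt (j + i) (0, Pi.single j v) = sys.markov i *ᵥ v := by
  cases i with
  | zero => simp [outputAt_apply, stateAt_impulse_of_le le_rfl, markov]
  | succ i =>
    rw [outputAt_apply, ← add_assoc, stateAt_impulse_add_succ]
    simp [markov, Matrix.mul_assoc, add_assoc]

lemma ExplainsWith.outputAt_shift {T : ℕ} {u : ℕ → Fin m → ℝ} {y : ℕ → Fin p → ℝ}
    {x : ℕ → Fin sys.n → ℝ} (h : ExplainsWith sys T u y x) {s k : ℕ} (hk : s + k < T) :
    sys.outputAt k (x s, fun i => u (s + i)) = y (s + k) := by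
  have hstate : ∀ j ≤ k, sys.stateAt j (x s, fun i => u (s + i)) = x (s + j) := by
    intro j hj
    induction j with
    | zero => rfl
    | succ j ih =>
      rw [LinSys.stateAt_succ, ih (Nat.le_of_succ_le hj), ← (h (s + j) (by omega)).1, add_assoc]
  rw [LinSys.outputAt_apply, hstate k le_rfl, (h (s + k) hk).2]

/-! ### Controllability, observability and lag -/

lemma Controllable.isReachable (h : Controllable sys) :
    IsReachable sys.A.mulVecLin (LinearMap.range sys.B.mulVecLin) := by
  intro W hA hB
  have hpow : ∀ (k : ℕ) (v : Fin m → ℝ), (sys.A ^ k * sys.B) *ᵥ v ∈ W := by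
    intro k v
    induction k with
    | zero => simpa using hB ⟨v, rfl⟩
    | succ k ih => simpa [pow_succ', Matrix.mul_assoc] using hA ih
  have hrange : LinearMap.range (ctrlMat sys sys.n).mulVecLin = ⊤ :=
    Submodule.eq_top_of_finrank_eq (h.trans (Module.finrank_fin_fun ℝ).symm)
  rw [eq_top_iff, ← hrange, Matrix.range_mulVecLin, Submodule.span_le]
  rintro _ ⟨⟨k, j⟩, rfl⟩
  have hcol := hpow k (Pi.single j 1)
  rwa [mulVec_single_one] at hcol

/-- The kernel of the observability matrix with `k` block rows: the states whose free response
vanishes at times `0, …, k - 1`. -/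
def LinSys.unobservable_s11 (sys : LinSys m p) (k : ℕ) : Submodule ℝ (Fin sys.n → ℝ) :=
  LinearMap.ker (obsMat sys k).mulVecLin

lemma LinSys.mem_unobservable_s11 {k : ℕ} {x : Fin sys.n → ℝ} :
    x ∈ sys.unobservable_s11 k ↔ ∀ i < k, (sys.C * sys.A ^ i) *ᵥ x = 0 := by
  simp only [unobservable_s11, LinearMap.mem_ker, funext_iff, Prod.forall, Fin.forall_iff]
  rfl

lemma LinSys.unobservable_antitone_s11 (sys : LinSys m p) : Antitone sys.unobservable_s11 :=
  fun _ _ h _ hx => mem_unobservable_s11.2 fun i hi => mem_unobservable_s11.1 hx i (hi.trans_le h)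

lemma LinSys.unobservable_succ_s11 (sys : LinSys m p) (k : ℕ) : sys.unobservable_s11 (k + 1) =
    LinearMap.ker sys.C.mulVecLin ⊓ (sys.unobservable_s11 k).comap sys.A.mulVecLin := by
  ext x
  simp only [mem_unobservable_s11, Nat.forall_lt_succ_left', Submodule.mem_inf, LinearMap.mem_ker,
    Submodule.mem_comap, mulVecLin_apply, pow_zero, Matrix.mul_one, mulVec_mulVec, pow_succ,
    Matrix.mul_assoc]

lemma LinSys.unobservable_add_eq {k : ℕ} (h : sys.unobservable_s11 (k + 1) = sys.unobservable_s11 k)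
    (j : ℕ) : sys.unobservable_s11 (k + j) = sys.unobservable_s11 k := by
  induction j with
  | zero => rfl
  | succ j ih => rw [← add_assoc, unobservable_succ_s11, ih, ← unobservable_succ_s11, h]

lemma LinSys.rank_obsMat_add_finrank_unobservable_s11 (sys : LinSys m p) (k : ℕ) :
    (obsMat sys k).rank + Module.finrank ℝ (sys.unobservable_s11 k) = sys.n :=
  ((obsMat sys k).mulVecLin.finrank_range_add_finrank_ker).trans (Module.finrank_fin_fun ℝ)

lemma LinSys.rank_obsMat_eq_n_iff {k : ℕ} :
    (obsMat sys k).rank = sys.n ↔ sys.unobservable_s11 k = ⊥ := by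
  have hrank := sys.rank_obsMat_add_finrank_unobservable_s11 k
  rw [← Submodule.finrank_eq_zero (R := ℝ)]
  omega

lemma LinSys.rank_obsMat_monotone (sys : LinSys m p) : Monotone fun k => (obsMat sys k).rank := by
  intro j k hjk
  have hj := sys.rank_obsMat_add_finrank_unobservable_s11 j
  have hk := sys.rank_obsMat_add_finrank_unobservable_s11 k
  have hfinrank := Submodule.finrank_mono (sys.unobservable_antitone_s11 hjk)
  dsimp only
  omega

lemma LinSys.rank_obsMat_succ_eq_iff_s11 {k : ℕ} : (obsMat sys (k + 1)).rank = (obsMat sys k).rank ↔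
    sys.unobservable_s11 (k + 1) = sys.unobservable_s11 k := by
  have hk := sys.rank_obsMat_add_finrank_unobservable_s11 k
  have hk' := sys.rank_obsMat_add_finrank_unobservable_s11 (k + 1)
  constructor
  · exact fun h =>
      Submodule.eq_of_le_of_finrank_eq (sys.unobservable_antitone_s11 k.le_succ) (by omega)
  · intro h
    rw [h] at hk'
    omega

lemma LinSys.unobservable_lag_succ_s11 (sys : LinSys m p) :
    sys.unobservable_s11 (lag sys + 1) = sys.unobservable_s11 (lag sys) := by
  obtain ⟨k, hk⟩ :=
    IsArtinian.monotone_stabilizes ⟨sys.unobservable_s11, fun _ _ h => sys.unobservable_antitone_s11 h⟩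
  exact rank_obsMat_succ_eq_iff_s11.1 (Nat.sInf_mem
    (s := {k | (obsMat sys (k + 1)).rank = (obsMat sys k).rank})
    ⟨k, rank_obsMat_succ_eq_iff_s11.2 (hk (k + 1) k.le_succ).symm⟩)

lemma Observable.unobservable_eq_bot (h : Observable sys) {k : ℕ} (hk : lag sys ≤ k) :
    sys.unobservable_s11 k = ⊥ := by
  have hlag : sys.unobservable_s11 (lag sys) = ⊥ := by
    rw [← LinSys.unobservable_add_eq sys.unobservable_lag_succ_s11 sys.n, eq_bot_iff,
      ← LinSys.rank_obsMat_eq_n_iff.1 h]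
    exact sys.unobservable_antitone_s11 (Nat.le_add_left _ _)
  exact eq_bot_iff.2 ((sys.unobservable_antitone_s11 hk).trans hlag.le)

lemma LinSys.rank_obsMat_add_le {k j : ℕ} (h : k + j ≤ lag sys) :
    (obsMat sys k).rank + j ≤ (obsMat sys (k + j)).rank := by
  induction j with
  | zero => rfl
  | succ j ih =>
    have hne : (obsMat sys (k + j + 1)).rank ≠ (obsMat sys (k + j)).rank :=
      Nat.notMem_of_lt_sInf (s := {k | (obsMat sys (k + 1)).rank = (obsMat sys k).rank}) h
    have hlt := (sys.rank_obsMat_monotone (k + j).le_succ).lt_of_ne' hne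
    exact (Nat.succ_le_succ (ih (Nat.le_of_succ_le h))).trans hlt

lemma LinSys.eq_of_obs_mul_eq {k : ℕ} (hk : sys.unobservable_s11 k = ⊥) {ι : Type*}
    {X Y : Matrix (Fin sys.n) ι ℝ}
    (h : ∀ i < k, sys.C * sys.A ^ i * X = sys.C * sys.A ^ i * Y) : X = Y := by
  ext r j
  have hcol : X.col j - Y.col j ∈ sys.unobservable_s11 k := by
    refine mem_unobservable_s11.2 fun i hi => ?_
    rw [mulVec_sub, sub_eq_zero]
    exact congrArg (fun Z => Z.col j) (h i hi)
  rw [hk, Submodule.mem_bot, sub_eq_zero] at hcol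
  exact congrFun hcol r

/-! ### Inclusion of restricted behaviors -/

/-- The behavior of `s1` restricted to the times `0, …, K` is contained in that of `s2`: every
response of `s1` is, up to time `K`, the response of `s2` to the same input from some initial
state. -/
def LinSys.BehaviorLE (s1 s2 : LinSys m p) (K : ℕ) : Prop :=
  ∀ x u, ∃ z, ∀ k ≤ K, s1.outputAt k (x, u) = s2.outputAt k (z, u)

variable {K : ℕ}

lemma LinSys.BehaviorLE.exists_stateMap (h : s1.BehaviorLE s2 K) :
    ∃ S : Matrix (Fin s2.n) (Fin s1.n) ℝ,
      ∀ k ≤ K, s2.C * s2.A ^ k * S = s1.C * s1.A ^ k := by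
  choose z hz using fun j => h (Pi.single j 1) 0
  refine ⟨Matrix.of fun i j => z j i, fun k hk => Matrix.ext_of_mulVec_single fun j => ?_⟩
  have hcol : (Matrix.of fun i j => z j i) *ᵥ Pi.single j 1 = z j := mulVec_single_one _ _
  rw [← mulVec_mulVec, hcol, ← outputAt_free, ← outputAt_free, hz j k hk]

lemma LinSys.BehaviorLE.rank_obsMat_le (h : s1.BehaviorLE s2 K) {k : ℕ} (hk : k ≤ K) :
    (obsMat s1 k).rank ≤ (obsMat s2 k).rank := by
  obtain ⟨S, hS⟩ := h.exists_stateMap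
  have hobs : obsMat s1 k = obsMat s2 k * S := by
    ext ⟨i, j⟩ l
    exact (congrFun₂ (hS i (i.2.le.trans hk)) j l).symm
  exact hobs ▸ Matrix.rank_mul_le_left _ _

/-- The rank of the observability matrix of `s2` is at least `s1.n` at `lag s1` block rows, at most
`s2.n`, and grows with each block row up to `lag s2`. -/
lemma LinSys.BehaviorLE.lag_le (h : s1.BehaviorLE s2 K) (hobs : Observable s1)
    (hK : lag s1 ≤ K) : lag s2 ≤ lag s1 + (s2.n - s1.n) := by
  rcases le_total (lag s2) (lag s1) with hle | hle
  · exact hle.trans (Nat.le_add_right _ _)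
  obtain ⟨j, hj⟩ := Nat.exists_eq_add_of_le hle
  have hrank1 := rank_obsMat_eq_n_iff.2 (hobs.unobservable_eq_bot le_rfl)
  have hrank2 := s2.rank_obsMat_add_finrank_unobservable_s11 (lag s1 + j)
  have hle12 := h.rank_obsMat_le hK
  have hgrow := rank_obsMat_add_le hj.ge
  omega

/-- Induction on `i`: apply an impulse at time `K - i` to both systems. As the earlier Markov
parameters agree, the state of `s2` matching the zero state of `s1` has vanishing free response
before time `K`, hence is zero, and the outputs at time `K` are the `i`-th Markov parameters. -/
lemma LinSys.BehaviorLE.markov_eq (h : s1.BehaviorLE s2 K) (hobs : s2.unobservable_s11 K = ⊥)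
    {i : ℕ} (hi : i ≤ K) : s1.markov i = s2.markov i := by
  induction i using Nat.strong_induction_on with
  | _ i ih =>
    obtain ⟨j, rfl⟩ := Nat.exists_eq_add_of_le' hi
    refine Matrix.ext_of_mulVec_single fun r => ?_
    obtain ⟨z, hz⟩ := h 0 (Pi.single j (Pi.single r 1))
    have hz0 : z = 0 := by
      rw [← Submodule.mem_bot ℝ, ← hobs, mem_unobservable_s11]
      intro k hk
      have hforced : s1.outputAt k (0, Pi.single j (Pi.single r 1)) =
          s2.outputAt k (0, Pi.single j (Pi.single r 1)) := by
        rcases lt_or_ge k j with hkj | hjk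
        · rw [outputAt_impulse_of_lt hkj, outputAt_impulse_of_lt hkj]
        · obtain ⟨l, rfl⟩ := Nat.exists_eq_add_of_le hjk
          rw [outputAt_impulse_add, outputAt_impulse_add, ih l (by omega) (by omega)]
      have hk' := hz k hk.le
      rwa [outputAt_eq_free_add_forced z, hforced, right_eq_add] at hk'
    have houtput := hz (j + i) le_rfl
    rwa [hz0, outputAt_impulse_add, outputAt_impulse_add] at houtput

/-- The state map is onto because its range is `A`-invariant and contains the range of `B`. -/
lemma LinSys.BehaviorLE.isomorphic (h : s1.BehaviorLE s2 K) (hobs1 : s1.unobservable_s11 K = ⊥)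
    (hobs2 : s2.unobservable_s11 K = ⊥) (hctrl : Controllable s2) : Isomorphic s1 s2 := by
  obtain ⟨S, hS⟩ := h.exists_stateMap
  have hA : S * s1.A = s2.A * S := eq_of_obs_mul_eq hobs2 fun k hk =>
    calc s2.C * s2.A ^ k * (S * s1.A) = s1.C * s1.A ^ (k + 1) := by
          rw [← Matrix.mul_assoc, hS k hk.le, Matrix.mul_assoc, pow_succ]
      _ = s2.C * s2.A ^ k * (s2.A * S) := by
          rw [← hS (k + 1) hk, pow_succ]
          simp only [Matrix.mul_assoc]
  have hB : S * s1.B = s2.B := eq_of_obs_mul_eq hobs2 fun k hk =>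
    calc s2.C * s2.A ^ k * (S * s1.B) = s1.markov (k + 1) := by
          rw [← Matrix.mul_assoc, hS k hk.le, markov]
      _ = s2.C * s2.A ^ k * s2.B := h.markov_eq hobs2 hk
  have hrange : LinearMap.range S.mulVecLin = ⊤ := by
    refine hctrl.isReachable _ ?_ ?_
    · rintro _ ⟨x, rfl⟩
      exact ⟨s1.A *ᵥ x, by simp [hA]⟩
    · rintro _ ⟨v, rfl⟩
      exact ⟨s1.B *ᵥ v, by simp [hB]⟩
  obtain ⟨S', hSS'⟩ :=
    mulVec_surjective_iff_exists_right_inverse.1 (LinearMap.range_eq_top.1 hrange)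
  have hS'S : S' * S = 1 := eq_of_obs_mul_eq hobs1 fun k hk => by
    rw [← hS k hk.le, Matrix.mul_one, Matrix.mul_assoc, ← Matrix.mul_assoc S, hSS', Matrix.one_mul]
  exact ⟨h.markov_eq hobs2 (Nat.zero_le K), S, S', hSS', hS'S, hA, hB,
    by simpa using (hS 0 (Nat.zero_le K)).symm⟩

/-! ### Informative experiments -/

lemma Isomorphic.symm (h : Isomorphic s1 s2) : Isomorphic s2 s1 := by
  obtain ⟨hD, S, S', hSS', hS'S, hA, hB, hC⟩ := h
  refine ⟨hD.symm, S', S, hS'S, hSS', ?_, ?_, ?_⟩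
  · calc S' * s2.A = S' * (s2.A * S) * S' := by
          rw [Matrix.mul_assoc, Matrix.mul_assoc, hSS', Matrix.mul_one]
      _ = s1.A * S' := by rw [← hA, ← Matrix.mul_assoc, hS'S, Matrix.one_mul]
  · rw [← hB, ← Matrix.mul_assoc, hS'S, Matrix.one_mul]
  · rw [hC, Matrix.mul_assoc, hSS', Matrix.mul_one]

lemma Isomorphic.trans (h12 : Isomorphic s1 s2) (h23 : Isomorphic s2 s3) : Isomorphic s1 s3 := by
  obtain ⟨hD, S, S', hSS', hS'S, hA, hB, hC⟩ := h12
  obtain ⟨kD, R, R', hRR', hR'R, kA, kB, kC⟩ := h23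
  refine ⟨hD.trans kD, R * S, S' * R', ?_, ?_, ?_, ?_, ?_⟩
  · rw [Matrix.mul_assoc, ← Matrix.mul_assoc S, hSS', Matrix.one_mul, hRR']
  · rw [Matrix.mul_assoc, ← Matrix.mul_assoc R', hR'R, Matrix.one_mul, hS'S]
  · rw [Matrix.mul_assoc, hA, ← Matrix.mul_assoc, kA, Matrix.mul_assoc]
  · rw [Matrix.mul_assoc, hB, kB]
  · rw [hC, kC, Matrix.mul_assoc]

lemma Isomorphic.n_eq (h : Isomorphic s1 s2) : s1.n = s2.n := by
  obtain ⟨-, S, S', hSS', hS'S, -⟩ := h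
  simpa using Matrix.square_of_invertible S' S hS'S hSS'

lemma informative_of_forall_isomorphic {T : ℕ} {u : ℕ → Fin m → ℝ} {y : ℕ → Fin p → ℝ} {L N : ℕ}
    (h : ∀ s ∈ ExplSet T u y ∩ Mset m p ∩ SLN m p L N, Isomorphic sys s) :
    Informative T u y sys.n L N := by
  refine ⟨Set.Subset.antisymm (fun s hs => ?_) fun s hs => ?_,
    fun s1 hs1 s2 hs2 => (h s1 hs1).symm.trans (h s2 hs2)⟩
  · exact ⟨⟨⟨hs.1.1, (h s hs).n_eq.symm⟩, hs.1.2⟩, hs.2⟩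
  · exact ⟨⟨hs.1.1.1, hs.1.2⟩, hs.2⟩

lemma Controllable.exists_spanning_windows (h : Controllable sys) (x0 : Fin sys.n → ℝ) (K : ℕ) :
    ∃ (u : ℕ → Fin m → ℝ) (x : ℕ → Fin sys.n → ℝ), x 0 = x0 ∧
      (∀ t, x (t + 1) = sys.A *ᵥ x t + sys.B *ᵥ u t) ∧
      Submodule.span ℝ (Set.range fun s : Fin ((K + 1) * m + sys.n) =>
        (x s, fun i : Fin (K + 1) => u (s + i))) = ⊤ := by
  have hdim : Module.finrank ℝ ((Fin sys.n → ℝ) × (Fin (K + 1) → Fin m → ℝ)) =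
      (K + 1) * m + sys.n := by
    simp [Module.finrank_pi_fintype, add_comm]
  obtain ⟨c, hc, hli⟩ :=
    (h.isReachable.windowShift K).exists_linearIndependent_orbit (x0, 0) hdim.ge
  refine ⟨fun t => (c t).2 0, fun t => (c t).1, hc.window_fst_zero, hc.window_fst_succ, ?_⟩
  simp only [← hc.window_snd]
  exact hli.span_eq_top_of_card_eq_finrank' (by simpa using hdim.symm)

/-- Any response of `s1` up to time `K` is a combination of windows of the data, and the same
combination of windows of `s2` gives a response of `s2`. -/
lemma ExplainsWith.behaviorLE {T M : ℕ} {u : ℕ → Fin m → ℝ} {y : ℕ → Fin p → ℝ}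
    {x : ℕ → Fin s1.n → ℝ} (hx : ExplainsWith s1 T u y x) (hT : M + K ≤ T)
    (hspan : Submodule.span ℝ (Set.range fun s : Fin M =>
      (x s, fun i : Fin (K + 1) => u (s + i))) = ⊤)
    (h2 : Explains s2 T u y) : s1.BehaviorLE s2 K := by
  intro x₀ w
  obtain ⟨z, hz⟩ := h2
  obtain ⟨g, hg⟩ := (Submodule.mem_span_range_iff_exists_fun ℝ).1
    (hspan ▸ Submodule.mem_top : (x₀, fun i : Fin (K + 1) => w i) ∈ _)
  have hstate : ∑ s, g s • x s = x₀ := by simpa [Prod.fst_sum] using congrArg Prod.fst hg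
  have hinput : ∀ k ≤ K, (∑ s, g s • fun i => u (s + i)) k = w k := by
    intro k hk
    simpa [Prod.snd_sum] using congrFun (congrArg Prod.snd hg) ⟨k, Nat.lt_succ_of_le hk⟩
  have houtput : ∀ {s : LinSys m p} {ξ : ℕ → Fin s.n → ℝ}, ExplainsWith s T u y ξ → ∀ k ≤ K,
      s.outputAt k (∑ r : Fin M, g r • ξ r, w) = ∑ r : Fin M, g r • y (r + k) := by
    intro s ξ hξ k hk
    calc s.outputAt k (∑ r : Fin M, g r • ξ r, w)
        = s.outputAt k (∑ r : Fin M, g r • (ξ r, fun i => u (r + i))) := by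
          rw [← LinSys.outputAt_congr _ fun i hi => hinput i (hi.trans hk)]
          congr 1
          ext <;> simp [Prod.fst_sum, Prod.snd_sum]
      _ = ∑ r : Fin M, g r • y (r + k) := by
          simp only [map_sum, map_smul]
          exact Finset.sum_congr rfl fun r _ => by rw [hξ.outputAt_shift (by omega)]
  exact ⟨∑ s, g s • z s, fun k hk => by rw [houtput hz k hk, ← hstate, houtput hx k hk]⟩

end Systems

/-- **Theorem 2 (existence of a shortest informative experiment).** For any
minimal true system with `ℓ_true ≤ L`, `n_true ≤ N`, and any initial state
`x₀`, there is an input sequence of length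
`T = L^a + (L^a + 1)m + n_true` (with `L^a = min(L, N - n_true + ℓ_true)`)
such that the resulting input-output data are informative for system
identification. -/
theorem shortest_experiment_exists {m p : ℕ} (hm : 1 ≤ m) (hp : 1 ≤ p)
    (sysT : LinSys m p) (hmin : MinimalSys sysT)
    (L N : ℕ) (hL : lag sysT ≤ L) (hN : sysT.n ≤ N)
    (x0 : Fin sysT.n → ℝ) :
    ∃ (u : ℕ → Fin m → ℝ) (x : ℕ → Fin sysT.n → ℝ) (y : ℕ → Fin p → ℝ),
      x 0 = x0 ∧
      (∀ s, x (s + 1) = sysT.A.mulVec (x s) + sysT.B.mulVec (u s)) ∧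
      (∀ s, y s = sysT.C.mulVec (x s) + sysT.D.mulVec (u s)) ∧
      Informative
        (min L (N - sysT.n + lag sysT) +
          (min L (N - sysT.n + lag sysT) + 1) * m + sysT.n)
        u y sysT.n L N := by
  set K := min L (N - sysT.n + lag sysT)
  obtain ⟨u, x, hx0, hx, hspan⟩ := hmin.1.exists_spanning_windows x0 K
  refine ⟨u, x, fun s => sysT.C *ᵥ x s + sysT.D *ᵥ u s, hx0, hx, fun _ => rfl,
    informative_of_forall_isomorphic ?_⟩
  rintro s ⟨⟨hexpl, hctrl, hobs⟩, hsL, hsN⟩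
  have hlagT : lag sysT ≤ K := le_min hL (Nat.le_add_left _ _)
  have hbeh : sysT.BehaviorLE s K :=
    ExplainsWith.behaviorLE (fun t _ => ⟨hx t, rfl⟩) (by omega) hspan hexpl
  have hlag : lag s ≤ K := by
    have hbound := hbeh.lag_le hmin.2 hlagT
    omega
  exact hbeh.isomorphic (hmin.2.unobservable_eq_bot hlagT) (hobs.unobservable_eq_bot hlag) hctrl
end

section
/- Let (A,B,C,D) be a discrete-time linear system with n states, m inputs and p outputs such that (C,A) is observable, and suppose it explains the data (u_{[0,t−1]}, y_{[0,t−1]}) with compatible state sequence x(0),...,x(t). Let k satisfy ℓ(C,A) ≤ k ≤ t−1. Then rank H_{k,t} equals the rank of the matrix obtained by stacking x_{[0,t−k−1]} on top of H_k(u_{[0,t−1]}), and, if moreover k ≥ 1, rank G_{k,t} also equals this rank; in particular rank G_{k,t} = rank H_{k,t}. -/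
/-!
Matrices with the same number of columns have the same rank as soon as they have the same kernel.
A vector `v` forms one linear combination of the windows of length `t - k` of each of the signals
`x`, `u` and `y`, and by linearity and time invariance the system explains these combinations on
`[0, k]`. Where the combined input vanishes, the combined output is the free response of the
combined initial state `z`. Hence a stack of `j ≤ k + 1` output block rows on the input Hankel
matrix kills `v` if and only if the input Hankel matrix kills `v` and `Ω_{j-1}` kills `z`, whereas
the state-input matrix kills `v` if and only if the former holds and `z = 0`.

The kernels of the observability matrices satisfy `ker Ω_{k+1} = ker C ∩ A⁻¹ (ker Ω_k)`, so once two
consecutive ones agree, which happens at the lag, the sequence is constant. Therefore `ker Ω_{k-1}`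
and `ker Ω_k` agree for `k ≥ ℓ(C,A)`, and observability makes them trivial.
-/

open Matrix

/-- The matrix obtained by stacking `x_{[0,c-1]}` on top of the Hankel matrix
of inputs with `k+1` block rows and `c` columns. -/
def stateInputMat {m n : ℕ} (x : ℕ → Fin n → ℝ) (u : ℕ → Fin m → ℝ)
    (k c : ℕ) : Matrix (Fin n ⊕ (Fin (k + 1) × Fin m)) (Fin c) ℝ :=
  Matrix.fromRows (Matrix.of fun i j => x (j : ℕ) i) (hankel u (k + 1) c)

section RankKernel

variable {ι κ n K : Type*} [Fintype n]

theorem rank_eq_of_ker_mulVecLin_eq [CommRing K] {M : Matrix ι n K} {N : Matrix κ n K}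
    (h : LinearMap.ker M.mulVecLin = LinearMap.ker N.mulVecLin) : M.rank = N.rank :=
  (M.mulVecLin.quotKerEquivRange.symm ≪≫ₗ Submodule.quotEquivOfEq _ _ h ≪≫ₗ
    N.mulVecLin.quotKerEquivRange).finrank_eq

theorem rank_add_finrank_ker_mulVecLin [Field K] (M : Matrix ι n K) :
    M.rank + Module.finrank K (LinearMap.ker M.mulVecLin) = Fintype.card n := by
  rw [Matrix.rank, LinearMap.finrank_range_add_finrank_ker, Module.finrank_fintype_fun_eq_card]

theorem ker_mulVecLin_eq_of_le_of_rank_eq [Field K] {M : Matrix ι n K} {N : Matrix κ n K}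
    (hle : LinearMap.ker M.mulVecLin ≤ LinearMap.ker N.mulVecLin) (hrank : M.rank = N.rank) :
    LinearMap.ker M.mulVecLin = LinearMap.ker N.mulVecLin := by
  have hM := rank_add_finrank_ker_mulVecLin M
  have hN := rank_add_finrank_ker_mulVecLin N
  exact Submodule.eq_of_le_of_finrank_eq hle (by lia)

theorem ker_mulVecLin_eq_bot_of_rank_eq_card [Field K] {M : Matrix ι n K}
    (h : M.rank = Fintype.card n) : LinearMap.ker M.mulVecLin = ⊥ :=
  Submodule.finrank_eq_zero.1 (by have := rank_add_finrank_ker_mulVecLin M; lia)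

theorem fromRows_mulVec_eq_zero_iff [NonUnitalNonAssocSemiring K] {M : Matrix ι n K}
    {N : Matrix κ n K} {v : n → K} :
    fromRows M N *ᵥ v = 0 ↔ M *ᵥ v = 0 ∧ N *ᵥ v = 0 := by
  simp only [funext_iff, Sum.forall]
  rfl

end RankKernel

section Observability

variable {m p : ℕ} (sys : LinSys m p)

theorem obsMat_mulVec_eq_zero_iff {k : ℕ} {z : Fin sys.n → ℝ} :
    obsMat sys k *ᵥ z = 0 ↔ ∀ r < k, (sys.C * sys.A ^ r) *ᵥ z = 0 :=
  ⟨fun h r hr => funext fun i => congrFun h (⟨r, hr⟩, i),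
    fun h => funext fun r => congrFun (h r.1 r.1.2) r.2⟩

theorem antitone_ker_obsMat : Antitone fun k => LinearMap.ker (obsMat sys k).mulVecLin := by
  intro k l hkl z hz
  simp only [LinearMap.mem_ker, mulVecLin_apply, obsMat_mulVec_eq_zero_iff] at hz ⊢
  exact fun r hr => hz r (hr.trans_le hkl)

theorem ker_obsMat_succ (k : ℕ) :
    LinearMap.ker (obsMat sys (k + 1)).mulVecLin =
      LinearMap.ker sys.C.mulVecLin ⊓
        (LinearMap.ker (obsMat sys k).mulVecLin).comap sys.A.mulVecLin := by
  ext z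
  simp only [Submodule.mem_inf, Submodule.mem_comap, LinearMap.mem_ker, mulVecLin_apply,
    obsMat_mulVec_eq_zero_iff, Nat.forall_lt_succ_left, pow_zero, one_mulVec, pow_succ,
    ← mulVec_mulVec]

theorem rank_obsMat_lag_succ : (obsMat sys (lag sys + 1)).rank = (obsMat sys (lag sys)).rank := by
  -- The kernels stabilize, so the infimum defining the lag is attained, not the junk `sInf ∅ = 0`.
  obtain ⟨k, hk⟩ := IsArtinian.monotone_stabilizes
    ⟨fun k => OrderDual.toDual (LinearMap.ker (obsMat sys k).mulVecLin), antitone_ker_obsMat sys⟩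
  exact Nat.sInf_mem (s := {k | (obsMat sys (k + 1)).rank = (obsMat sys k).rank})
    ⟨k, rank_eq_of_ker_mulVecLin_eq (hk (k + 1) k.le_succ).symm⟩

variable {sys}

theorem ker_obsMat_succ_eq_of_lag_le {k : ℕ} (hk : lag sys ≤ k) :
    LinearMap.ker (obsMat sys (k + 1)).mulVecLin = LinearMap.ker (obsMat sys k).mulVecLin := by
  induction k, hk using Nat.le_induction with
  | base =>
    exact ker_mulVecLin_eq_of_le_of_rank_eq (antitone_ker_obsMat sys (Nat.le_succ _))
      (rank_obsMat_lag_succ sys)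
  | succ k _ ih => rw [ker_obsMat_succ, ih, ← ker_obsMat_succ, ih]

theorem ker_obsMat_eq_of_lag_le {k l : ℕ} (hk : lag sys ≤ k) (hkl : k ≤ l) :
    LinearMap.ker (obsMat sys l).mulVecLin = LinearMap.ker (obsMat sys k).mulVecLin := by
  induction l, hkl using Nat.le_induction with
  | base => rfl
  | succ l hkl ih => rw [ker_obsMat_succ_eq_of_lag_le (hk.trans hkl), ih]

theorem Observable.ker_obsMat_eq_bot (hobs : Observable sys) {k : ℕ} (hk : lag sys ≤ k) :
    LinearMap.ker (obsMat sys k).mulVecLin = ⊥ := by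
  have hn : LinearMap.ker (obsMat sys sys.n).mulVecLin = ⊥ :=
    ker_mulVecLin_eq_bot_of_rank_eq_card (hobs.trans (Fintype.card_fin _).symm)
  rw [← ker_obsMat_eq_of_lag_le hk (le_max_left k sys.n), eq_bot_iff, ← hn]
  exact antitone_ker_obsMat sys (le_max_right k sys.n)

end Observability

section WindowComb

/-- The signal whose value at time `r` is the linear combination with coefficients `v` of the
window `f r, …, f (r + c - 1)` of the signal `f`. The blocks of a Hankel matrix of `f` applied to
`v` are the values of this signal. -/
def windowComb {c : ℕ} {R M : Type*} [Semiring R] [AddCommMonoid M] [Module R M] (v : Fin c → R)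
    (f : ℕ → M) (r : ℕ) : M :=
  ∑ j : Fin c, v j • f (r + j)

theorem hankel_mulVec_eq_zero_iff {d k c : ℕ} {f : ℕ → Fin d → ℝ} {v : Fin c → ℝ} :
    hankel f k c *ᵥ v = 0 ↔ ∀ r < k, windowComb v f r = 0 := by
  simp [funext_iff, Fin.forall_iff, hankel, windowComb, mulVec, dotProduct, mul_comm]

theorem stateInputMat_mulVec_eq_zero_iff {m n k c : ℕ} {x : ℕ → Fin n → ℝ} {u : ℕ → Fin m → ℝ}
    {v : Fin c → ℝ} :
    stateInputMat x u k c *ᵥ v = 0 ↔ windowComb v x 0 = 0 ∧ hankel u (k + 1) c *ᵥ v = 0 := by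
  rw [stateInputMat, fromRows_mulVec_eq_zero_iff]
  simp [funext_iff, windowComb, mulVec, dotProduct, mul_comm]

variable {m p t : ℕ} {u : ℕ → Fin m → ℝ} {y : ℕ → Fin p → ℝ} {sys : LinSys m p}
  {x : ℕ → Fin sys.n → ℝ}

theorem explainsWith_windowComb (hx : ExplainsWith sys t u y x) {s c : ℕ} (hsc : s + c ≤ t + 1)
    (v : Fin c → ℝ) :
    ExplainsWith sys s (windowComb v u) (windowComb v y) (windowComb v x) := by
  intro r hr
  simp only [windowComb, mulVec_sum, mulVec_smul, ← Finset.sum_add_distrib, ← smul_add]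
  refine ⟨Finset.sum_congr rfl fun j _ => ?_, Finset.sum_congr rfl fun j _ => ?_⟩
  · rw [add_right_comm, (hx (r + j) (by lia)).1]
  · rw [(hx (r + j) (by lia)).2]

theorem ExplainsWith.state_eq_of_input_eq_zero (hx : ExplainsWith sys t u y x)
    (hu : ∀ r < t, u r = 0) {r : ℕ} (hr : r ≤ t) : x r = sys.A ^ r *ᵥ x 0 := by
  induction r with
  | zero => simp
  | succ r ih =>
    rw [(hx r hr).1, hu r hr, ih (Nat.le_of_succ_le hr), mulVec_zero, add_zero, mulVec_mulVec,
      ← pow_succ']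

theorem ExplainsWith.output_eq_of_input_eq_zero (hx : ExplainsWith sys t u y x)
    (hu : ∀ r < t, u r = 0) {r : ℕ} (hr : r < t) : y r = (sys.C * sys.A ^ r) *ᵥ x 0 := by
  rw [(hx r hr).2, hu r hr, hx.state_eq_of_input_eq_zero hu hr.le, mulVec_zero, add_zero,
    mulVec_mulVec]

theorem ExplainsWith.fromRows_hankel_mulVec_eq_zero_iff (hx : ExplainsWith sys t u y x) {i j c : ℕ}
    (hic : i + c ≤ t + 1) (hji : j ≤ i) {v : Fin c → ℝ} :
    fromRows (hankel y j c) (hankel u i c) *ᵥ v = 0 ↔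
      obsMat sys j *ᵥ windowComb v x 0 = 0 ∧ hankel u i c *ᵥ v = 0 := by
  rw [fromRows_mulVec_eq_zero_iff]
  refine and_congr_left fun hu => ?_
  rw [hankel_mulVec_eq_zero_iff] at hu ⊢
  rw [obsMat_mulVec_eq_zero_iff]
  refine forall₂_congr fun r hr => ?_
  rw [(explainsWith_windowComb hx hic v).output_eq_of_input_eq_zero hu (hr.trans_le hji)]

end WindowComb

section Rank

variable {m p t k : ℕ} {u : ℕ → Fin m → ℝ} {y : ℕ → Fin p → ℝ} {sys : LinSys m p}
  {x : ℕ → Fin sys.n → ℝ}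

theorem ExplainsWith.rank_Gkt_eq_rank_Hkt (hx : ExplainsWith sys t u y x) (hkt : k ≤ t)
    (hlk : lag sys ≤ k) : (Gkt u y k t).rank = (Hkt u y k t).rank := by
  have hcols : k + 1 + (t - k) ≤ t + 1 := by lia
  have hker (z : Fin sys.n → ℝ) : obsMat sys k *ᵥ z = 0 ↔ obsMat sys (k + 1) *ᵥ z = 0 := by
    simpa using (SetLike.ext_iff.1 (ker_obsMat_succ_eq_of_lag_le hlk) z).symm
  refine rank_eq_of_ker_mulVecLin_eq (Submodule.ext fun v => ?_)
  rw [LinearMap.mem_ker, LinearMap.mem_ker, mulVecLin_apply, mulVecLin_apply, Gkt, Hkt,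
    hx.fromRows_hankel_mulVec_eq_zero_iff hcols k.le_succ,
    hx.fromRows_hankel_mulVec_eq_zero_iff hcols le_rfl, hker]

theorem ExplainsWith.rank_Hkt_eq_rank_stateInputMat (hx : ExplainsWith sys t u y x) (hkt : k ≤ t)
    (hobs : Observable sys) (hlk : lag sys ≤ k) :
    (Hkt u y k t).rank = (stateInputMat x u k (t - k)).rank := by
  have hcols : k + 1 + (t - k) ≤ t + 1 := by lia
  have hker (z : Fin sys.n → ℝ) : obsMat sys (k + 1) *ᵥ z = 0 ↔ z = 0 := by
    simpa using SetLike.ext_iff.1 (hobs.ker_obsMat_eq_bot (hlk.trans k.le_succ)) z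
  refine rank_eq_of_ker_mulVecLin_eq (Submodule.ext fun v => ?_)
  rw [LinearMap.mem_ker, LinearMap.mem_ker, mulVecLin_apply, mulVecLin_apply, Hkt,
    hx.fromRows_hankel_mulVec_eq_zero_iff hcols le_rfl, stateInputMat_mulVec_eq_zero_iff, hker]

end Rank

/-- For an observable system explaining the data with state sequence `x`, and
`ℓ(C,A) ≤ k ≤ t - 1`: `rank H_{k,t}` equals the rank of
`[x_{[0,t-k-1]}; H_k(u_{[0,t-1]})]`, and for `k ≥ 1` so does `rank G_{k,t}`;
in particular `rank G_{k,t} = rank H_{k,t}`. -/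
theorem rank_Hkt_eq_stateInput {m p : ℕ} (t k : ℕ) (hkt : k < t)
    (u : ℕ → Fin m → ℝ) (y : ℕ → Fin p → ℝ)
    (sys : LinSys m p) (hobs : Observable sys)
    (x : ℕ → Fin sys.n → ℝ) (hx : ExplainsWith sys t u y x)
    (hlk : lag sys ≤ k) :
    (Hkt u y k t).rank = (stateInputMat x u k (t - k)).rank ∧
    (1 ≤ k → (Gkt u y k t).rank = (stateInputMat x u k (t - k)).rank) ∧
    (1 ≤ k → (Gkt u y k t).rank = (Hkt u y k t).rank) := by
  have hHS := hx.rank_Hkt_eq_rank_stateInputMat hkt.le hobs hlk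
  have hGH := hx.rank_Gkt_eq_rank_Hkt hkt.le hlk
  exact ⟨hHS, fun _ => hGH.trans hHS, fun _ => hGH⟩
end
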